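/- Let f be an analytic function in an open neighbourhood U of the closed unit disk D_1. Assume f has in D_1 exactly s zeroes (counted with multiplicity) and is (s,p)-valent in D_1. Let Z be a subset of the interior of D_1 and put ρ = ρ(Z) = min{η : Z ⊂ D_η} < 1. Then for every 0 < R < 1 and every α > 0 with c_{s,α}(Z) > 0, max_{|z| ≤ R} |f(z)| ≤ σ_p(R,ρ) · (6e^{1/α}/c_{s,α}(Z))^s · max_{z ∈ Z} |f(z)|, where σ_p(R,ρ) = (((1+R)/(1−R))·((1+ρ)/(1−ρ)))^{2p}. In particular, max_{|z| ≤ R} |f(z)| ≤ σ_p(R,ρ)·K_s(Z)·max_{Z}|f(z)| with K_s(Z) = inf_{α>0} (6e^{1/α}/c_{s,α}(Z))^s. -/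

import Mathlib

-- The order of vanishing of `g` at `z` (zero if `g` is not analytic at `z`).
open scoped Classical in
noncomputable def ordAt (g : ℂ → ℂ) (z : ℂ) : ℕ∞ :=
  if h : AnalyticAt ℂ g z then analyticOrderAt g z else 0

/-- The number of zeroes of `g` in `Ω`, counted with multiplicity. -/
noncomputable def solCount (g : ℂ → ℂ) (Ω : Set ℂ) : ℕ∞ :=
  ∑' z : Ω, ordAt g z

/-- `f` is `(s,p)`-valent in `Ω`: for every polynomial `P` of degree at most `s`,
the equation `f = P` has at most `p` solutions in `Ω`, counted with multiplicity. -/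
def IsSPValentOn (f : ℂ → ℂ) (Ω : Set ℂ) (s p : ℕ) : Prop :=
  ∀ P : Polynomial ℂ, P.degree ≤ (s : ℕ) →
    solCount (fun z => f z - P.eval z) Ω ≤ (p : ℕ∞)

/-- `g` is `p`-valent in `Ω`: for every constant `c`, the equation `g = c` has
at most `p` solutions in `Ω`, counted with multiplicity. -/
def IsPValentOn (g : ℂ → ℂ) (Ω : Set ℂ) (p : ℕ) : Prop :=
  ∀ c : ℂ, solCount (fun z => g z - c) Ω ≤ (p : ℕ∞)

/-- The `(d,α)`-Cartan measure of a set `Z ⊆ ℂ`: the infimum of `(∑ r_j^α)^{1/α}` over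
all coverings of `Z` by at most `d` disks with positive radii `r_j`. -/
noncomputable def cartanMeasure (d : ℕ) (α : ℝ) (Z : Set ℂ) : ℝ :=
  sInf {t : ℝ | ∃ (p : ℕ) (w : Fin p → ℂ) (r : Fin p → ℝ), p ≤ d ∧ (∀ j, 0 < r j) ∧
    Z ⊆ (⋃ j, Metric.closedBall (w j) (r j)) ∧ t = (∑ j, r j ^ α) ^ (1 / α)}

/-!
Write `f = P * g`, where the monic polynomial `P` carries the `s` zeros and `g` has no zeros.
Comparing `f` with the polynomials `c * P` shows that `g` is `p`-valent. Cartan's lemma gives a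
point `w ∈ Z` at which `|P|` is bounded below in terms of the Cartan measure, while `|P| ≤ 2 ^ s` on
the unit disk. What remains is the distortion theorem for `g`, which by integration and
transport under the automorphisms of the disk reduces to `|g' 0 / g 0| ≤ 4 * p`.

For that bound write `g = g 0 * exp (2 * p * ζ)` with `ζ 0 = 0`, and measure `ζ` in the metric
`|dζ| / cosh (re ζ)`, the pull-back under `exp` of the spherical metric (total area `4 * π`).
Jensen's formula, averaged over the values on circles `|c| = const`, bounds the area of the image of
the disk by `2 * π`. The spherical isoperimetric inequality `A * (4 * π - A) ≤ ℓ ^ 2`, which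
is Wirtinger's inequality for a lift of the curve to the unit sphere of `ℂ²`, combines with
`ℓ ^ 2 ≤ 2 * π * r * A'` into a logistic differential inequality for the area `A r` of the image of
`|z| < r`. Comparison with its solutions gives `A r ≤ 4 * π * r ^ 2 / (1 + r ^ 2)`, and
`r → 0` yields `|ζ' 0| ≤ 2`.
-/

open Complex Filter MeasureTheory Metric Set Topology
open scoped ComplexConjugate Interval Real

section ZeroCounting

variable {F G : ℂ → ℂ} {K : Set ℂ}

theorem summable_enat {ι : Type*} (u : ι → ℕ∞) : Summable u :=
  ⟨_, hasSum_of_isLUB_of_nonneg _ (fun _ ↦ bot_le) isLUB_iSup⟩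

theorem ordAt_eq_analyticOrderAt (F : ℂ → ℂ) (z : ℂ) : ordAt F z = analyticOrderAt F z := by
  unfold ordAt
  split_ifs with hF
  · rfl
  · exact (analyticOrderAt_of_not_analyticAt hF).symm

theorem solCount_eq_zero_of_forall_ne_zero (hF : ∀ z ∈ K, F z ≠ 0) : solCount F K = 0 := by
  have (z : K) : ordAt F z = 0 := by
    rw [ordAt_eq_analyticOrderAt]
    exact analyticOrderAt_eq_zero.2 (.inr (hF z z.2))
  simp only [solCount, this, tsum_zero]

theorem solCount_congr (hK : IsOpen K) (hFG : EqOn F G K) : solCount F K = solCount G K :=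
  tsum_congr fun z ↦ by
    simp only [ordAt_eq_analyticOrderAt,
      analyticOrderAt_congr (hFG.eventuallyEq_of_mem (hK.mem_nhds z.2))]

theorem solCount_le_solCount_mul (hF : AnalyticOnNhd ℂ F K) (hG : AnalyticOnNhd ℂ G K) :
    solCount G K ≤ solCount (F * G) K := by
  refine (summable_enat _).tsum_le_tsum (fun z ↦ ?_) (summable_enat _)
  simp only [ordAt_eq_analyticOrderAt, analyticOrderAt_mul (hF z z.2) (hG z z.2)]
  exact le_add_self

theorem solCount_comp_le_solCount {φ : ℂ → ℂ} {L : Set ℂ} (hφ : AnalyticOnNhd ℂ φ K)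
    (hφ' : ∀ z ∈ K, deriv φ z ≠ 0) (hmaps : MapsTo φ K L) (hinj : InjOn φ K) :
    solCount (F ∘ φ) K ≤ solCount F L := by
  refine (summable_enat _).tsum_le_tsum_of_inj (hmaps.restrict φ K L)
    ((hmaps.restrict_inj).2 hinj) (fun _ _ ↦ bot_le) (fun z ↦ ?_) (summable_enat _)
  simp only [ordAt_eq_analyticOrderAt, MapsTo.val_restrict_apply,
    analyticOrderAt_comp_of_deriv_ne_zero (hφ z z.2) (hφ' z z.2), le_refl]

theorem solCount_le_solCount_of_subset {L : Set ℂ} (hKL : K ⊆ L) : solCount F K ≤ solCount F L :=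
  solCount_comp_le_solCount (φ := id) (fun _ _ ↦ analyticAt_id) (by simp) hKL (injOn_id K)

theorem analyticOnNhd_dslope (hF : AnalyticOnNhd ℂ F K) {z₀ : ℂ} (hz₀ : z₀ ∈ K) :
    AnalyticOnNhd ℂ (dslope F z₀) K := by
  have hV : IsOpen {z | AnalyticAt ℂ F z} := isOpen_analyticAt ℂ F
  have hd : DifferentiableOn ℂ (dslope F z₀) {z | AnalyticAt ℂ F z} :=
    (Complex.differentiableOn_dslope (hV.mem_nhds (hF z₀ hz₀))).2
      fun z hz ↦ hz.differentiableAt.differentiableWithinAt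
  exact fun z hz ↦ hd.analyticAt (hV.mem_nhds (hF z hz))

theorem solCount_eq_solCount_dslope_add_one (hF : AnalyticOnNhd ℂ F K) {z₀ : ℂ} (hz₀ : z₀ ∈ K)
    (h0 : F z₀ = 0) : solCount F K = solCount (dslope F z₀) K + 1 := by
  classical
  have hfactor : F = dslope F z₀ * fun z ↦ z - z₀ := by
    ext z
    simpa [h0, mul_comm] using (sub_smul_dslope F z₀ z).symm
  have hord (z : K) :
      ordAt F z = ordAt (dslope F z₀) z + if z = ⟨z₀, hz₀⟩ then 1 else 0 := by
    simp only [ordAt_eq_analyticOrderAt]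
    conv_lhs => rw [hfactor, analyticOrderAt_mul (analyticOnNhd_dslope hF hz₀ z z.2) (by fun_prop)]
    congr 1
    split_ifs with hz
    · simp [hz]
    · exact analyticOrderAt_eq_zero.2 (.inr (sub_ne_zero.2 fun h ↦ hz (Subtype.ext h)))
  rw [solCount, tsum_congr hord, (summable_enat _).tsum_add (summable_enat _), tsum_ite_eq,
    solCount]

theorem ne_zero_of_solCount_eq_zero (hF : AnalyticOnNhd ℂ F K) (hK : solCount F K = 0) :
    ∀ z ∈ K, F z ≠ 0 := by
  intro z hz h0
  simp [solCount_eq_solCount_dslope_add_one hF hz h0] at hK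

theorem exists_eq_multiset_prod_mul_of_solCount_eq {n : ℕ} (hF : AnalyticOnNhd ℂ F K)
    (hn : solCount F K = n) :
    ∃ (S : Multiset ℂ) (G : ℂ → ℂ), S.card = n ∧ (∀ x ∈ S, x ∈ K) ∧ AnalyticOnNhd ℂ G K ∧
      (∀ z ∈ K, G z ≠ 0) ∧ ∀ z, F z = (S.map (z - ·)).prod * G z := by
  induction n generalizing F with
  | zero => exact ⟨0, F, by simp, by simp, hF, ne_zero_of_solCount_eq_zero hF (by simpa using hn),
      by simp⟩
  | succ n ih =>
    obtain ⟨z₀, hz₀, h0⟩ : ∃ z ∈ K, F z = 0 := by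
      by_contra! hne
      exact (Nat.cast_ne_zero.2 n.succ_ne_zero)
        (hn.symm.trans (solCount_eq_zero_of_forall_ne_zero hne))
    rw [solCount_eq_solCount_dslope_add_one hF hz₀ h0, Nat.cast_add_one] at hn
    obtain ⟨S, G, hcard, hSK, hG, hG0, hfactor⟩ :=
      ih (analyticOnNhd_dslope hF hz₀) (ENat.add_left_injective_of_ne_top ENat.one_ne_top hn)
    refine ⟨z₀ ::ₘ S, G, by simp [hcard], by simpa [hz₀] using hSK, hG, hG0, fun z ↦ ?_⟩
    have := sub_smul_dslope F z₀ z
    rw [h0, sub_zero, smul_eq_mul] at this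
    rw [← this, hfactor z, Multiset.map_cons, Multiset.prod_cons, mul_assoc]

end ZeroCounting

section Valence

variable {f g : ℂ → ℂ} {K : Set ℂ} {s p : ℕ}

theorem IsPValentOn.mono {L : Set ℂ} (hg : IsPValentOn g L p) (hKL : K ⊆ L) :
    IsPValentOn g K p :=
  fun c ↦ (solCount_le_solCount_of_subset hKL).trans (hg c)

theorem IsPValentOn.comp {φ : ℂ → ℂ} {L : Set ℂ} (hg : IsPValentOn g L p)
    (hφ : AnalyticOnNhd ℂ φ K) (hφ' : ∀ z ∈ K, deriv φ z ≠ 0) (hmaps : MapsTo φ K L)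
    (hinj : InjOn φ K) : IsPValentOn (g ∘ φ) K p :=
  fun c ↦ (solCount_comp_le_solCount (F := fun z ↦ g z - c) hφ hφ' hmaps hinj).trans (hg c)

theorem IsPValentOn.congr {h : ℂ → ℂ} (hg : IsPValentOn g K p) (hK : IsOpen K)
    (hgh : EqOn g h K) : IsPValentOn h K p :=
  fun c ↦ (solCount_congr hK fun _ hz ↦ congrArg (· - c) (hgh hz)).symm.trans_le (hg c)

theorem IsPValentOn.pos (hg : IsPValentOn g K p) (hK : AnalyticOnNhd ℂ g K) (hne : K.Nonempty) :
    0 < p := by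
  obtain ⟨z, hz⟩ := hne
  by_contra! hp
  have := hg (g z)
  rw [Nat.le_zero.1 hp, Nat.cast_zero, nonpos_iff_eq_zero] at this
  exact ne_zero_of_solCount_eq_zero (hK.sub analyticOnNhd_const) this z hz (sub_self _)

theorem eval_multiset_prod_X_sub_C (S : Multiset ℂ) (z : ℂ) :
    (S.map fun x ↦ Polynomial.X - Polynomial.C x).prod.eval z = (S.map (z - ·)).prod := by
  simp [Polynomial.eval_multiset_prod]

theorem IsSPValentOn.isPValentOn_of_eq_multiset_prod_mul {S : Multiset ℂ}
    (hf : IsSPValentOn f K S.card p) (hg : AnalyticOnNhd ℂ g K)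
    (hfg : ∀ z, f z = (S.map (z - ·)).prod * g z) : IsPValentOn g K p := by
  intro c
  let Q : Polynomial ℂ := (S.map fun x ↦ Polynomial.X - Polynomial.C x).prod
  have hQ_eval (z : ℂ) : Q.eval z = (S.map (z - ·)).prod := eval_multiset_prod_X_sub_C S z
  have hQ_degree : (c • Q).degree ≤ S.card :=
    (Polynomial.degree_smul_le c Q).trans (by
      simp [Q, Polynomial.degree_multiset_prod_of_monic, Polynomial.monic_X_sub_C])
  have hprod : (fun z ↦ f z - (c • Q).eval z) = (Q.eval ·) * fun z ↦ g z - c := by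
    ext z
    simp only [Polynomial.eval_smul, smul_eq_mul, Pi.mul_apply, hfg, hQ_eval]
    ring
  calc solCount (fun z ↦ g z - c) K
    _ ≤ solCount ((Q.eval ·) * fun z ↦ g z - c) K :=
      solCount_le_solCount_mul ((AnalyticOnNhd.eval_polynomial Q).mono (subset_univ K))
        (hg.sub analyticOnNhd_const)
    _ ≤ p := hprod ▸ hf _ hQ_degree

end Valence

section CartanLemma

/- The discs are chosen greedily: the largest `k` for which some disc of radius `r k` holds `k`
points of `S` comes first, and its points are removed before continuing. -/
theorem exists_list_forall_countP_dist_lt {X : Type*} [PseudoMetricSpace X] {r : ℕ → ℝ}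
    (hr : Monotone r) (S : Multiset X) :
    ∃ L : List (X × ℕ), (∀ a ∈ L, 0 < a.2) ∧ (L.map Prod.snd).sum ≤ S.card ∧
      ∀ z, (∀ a ∈ L, 2 * r a.2 < dist z a.1) → ∀ k, 0 < k → S.countP (dist z · ≤ r k) < k := by
  induction S using Multiset.strongInductionOn with
  | ih S ih =>
  by_cases hex : {k | 0 < k ∧ ∃ w, k ≤ S.countP (dist w · ≤ r k)}.Nonempty
  swap
  · exact ⟨[], by simp, by simp, fun z _ k hk ↦ not_le.1 fun h ↦ hex ⟨k, hk, z, h⟩⟩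
  obtain ⟨k, ⟨hk, w, hw⟩, hmax⟩ :
      ∃ k, IsGreatest {k | 0 < k ∧ ∃ w, k ≤ S.countP (dist w · ≤ r k)} k :=
    have hbdd : BddAbove {k | 0 < k ∧ ∃ w, k ≤ S.countP (dist w · ≤ r k)} :=
      ⟨S.card, fun j ⟨_, _, hj⟩ ↦ hj.trans (Multiset.countP_le_card _ _)⟩
    ⟨_, Nat.sSup_mem hex hbdd, fun _ ↦ le_csSup hbdd⟩
  let T := S.filter fun x ↦ ¬ dist w x ≤ r k
  have hcard : k + T.card ≤ S.card := by
    rw [S.card_eq_countP_add_countP (dist w · ≤ r k), S.countP_eq_card_filter (¬ dist w · ≤ r k)]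
    exact Nat.add_le_add_right hw _
  have hTS : T < S := lt_of_le_of_ne (Multiset.filter_le _ _) fun h ↦ by
    rw [h] at hcard
    lia
  obtain ⟨L, hL_pos, hL_sum, hL⟩ := ih T hTS
  refine ⟨(w, k) :: L, by simpa [hk] using hL_pos, ?_, fun z hz j hj ↦ not_le.1 fun hzj ↦ ?_⟩
  · simp only [List.map_cons, List.sum_cons]
    lia
  have hjk : r j ≤ r k := hr (hmax ⟨hj, z, hzj⟩)
  have hzw : 2 * r k < dist z w := hz _ List.mem_cons_self
  have hT : S.countP (dist z · ≤ r j) = T.countP (dist z · ≤ r j) := by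
    rw [Multiset.countP_filter]
    refine Multiset.countP_congr rfl fun x _ ↦ propext (iff_self_and.2 fun hzx hwx ↦ ?_)
    linarith [dist_triangle_right z w x]
  exact (hL z (fun a ha ↦ hz a (List.mem_cons_of_mem _ ha)) j hj).not_ge (hT ▸ hzj)

theorem prod_range_le_multiset_prod_of_countP_lt {r : ℕ → ℝ} (hr : ∀ k, 0 ≤ r k) {D : Multiset ℝ}
    (hD : ∀ x ∈ D, 0 ≤ x) (hcount : ∀ k, 0 < k → D.countP (· ≤ r k) < k) :
    ∏ k ∈ Finset.range D.card, r (k + 1) ≤ D.prod := by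
  obtain ⟨n, hn⟩ : ∃ n, D.card = n := ⟨_, rfl⟩
  rw [hn]
  induction n generalizing D with
  | zero => simp [Multiset.card_eq_zero.1 hn]
  | succ n ih =>
    obtain ⟨x, hx, hxr⟩ : ∃ x ∈ D, r (n + 1) < x := by
      by_contra! hle
      exact (hcount (n + 1) n.succ_pos).ne ((Multiset.countP_eq_card.2 hle).trans hn)
    obtain ⟨E, rfl⟩ := Multiset.exists_cons_of_mem hx
    have hE : ∏ k ∈ Finset.range n, r (k + 1) ≤ E.prod :=
      ih (fun y hy ↦ hD y (Multiset.mem_cons_of_mem hy))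
        (fun k hk ↦ (Multiset.countP_le_of_le _ (Multiset.le_cons_self E x)).trans_lt (hcount k hk))
        (by simpa using hn)
    rw [Finset.prod_range_succ, Multiset.prod_cons, mul_comm]
    exact mul_le_mul hxr.le hE (Finset.prod_nonneg fun _ _ ↦ hr _) (hD x hx)

theorem cartanMeasure_le_of_list {d : ℕ} {α : ℝ} {Z : Set ℂ} {L : List (ℂ × ℝ)}
    (hlen : L.length ≤ d) (hpos : ∀ a ∈ L, 0 < a.2) (hZ : ∀ z ∈ Z, ∃ a ∈ L, dist z a.1 ≤ a.2) :
    cartanMeasure d α Z ≤ (L.map fun a ↦ a.2 ^ α).sum ^ (1 / α) := by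
  refine csInf_le ⟨0, ?_⟩ ⟨L.length, fun j ↦ L[j].1, fun j ↦ L[j].2, hlen,
    fun j ↦ hpos _ (List.getElem_mem _), fun z hz ↦ ?_, ?_⟩
  · rintro _ ⟨p, w, r, -, hr, -, rfl⟩
    exact Real.rpow_nonneg (Finset.sum_nonneg fun j _ ↦ Real.rpow_nonneg (hr j).le _) _
  · obtain ⟨a, ha, hza⟩ := hZ z hz
    obtain ⟨j, rfl⟩ := List.mem_iff_get.1 ha
    exact mem_iUnion.2 ⟨j, hza⟩
  · exact congrArg (· ^ (1 / α)) (Fin.sum_univ_fun_getElem L fun a ↦ a.2 ^ α).symm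

theorem cartanMeasure_zero_le {α : ℝ} (hα : α ≠ 0) (Z : Set ℂ) : cartanMeasure 0 α Z ≤ 0 := by
  rcases Z.eq_empty_or_nonempty with rfl | ⟨z, hz⟩
  · simpa [hα] using cartanMeasure_le_of_list (d := 0) (α := α) (Z := ∅) (L := []) (by simp)
      (by simp) (by simp)
  · refine le_of_eq_of_le (congrArg sInf (eq_empty_iff_forall_notMem.2 ?_)) Real.sInf_empty.le
    rintro _ ⟨p, w, r, hp, -, hcover, -⟩
    obtain ⟨j, -⟩ := mem_iUnion.1 (hcover hz)
    exact absurd j.pos (by lia)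

/-- The radius that Cartan's lemma allots to a disc containing `k` of `n` given points, chosen so
that the product of the distances to these points is at least `h ^ n` off the discs. -/
noncomputable def cartanRadius (α h : ℝ) (n k : ℕ) : ℝ :=
  (k * (Real.exp 1 * h ^ α / n)) ^ (1 / α)

section cartanRadius

variable {α h : ℝ} {n k : ℕ}

theorem cartanRadius_nonneg (hh : 0 ≤ h) : 0 ≤ cartanRadius α h n k := by
  unfold cartanRadius
  positivity

theorem cartanRadius_pos (hh : 0 < h) (hn : 0 < n) (hk : 0 < k) : 0 < cartanRadius α h n k := by
  unfold cartanRadius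
  positivity

theorem monotone_cartanRadius (hα : 0 < α) (hh : 0 ≤ h) : Monotone (cartanRadius α h n) :=
  fun j k hjk ↦ by
    unfold cartanRadius
    gcongr

theorem cartanRadius_rpow (hα : 0 < α) (hh : 0 ≤ h) :
    cartanRadius α h n k ^ α = k * (Real.exp 1 * h ^ α / n) := by
  rw [cartanRadius, one_div, Real.rpow_inv_rpow (by positivity) hα.ne']

theorem pow_le_prod_range_cartanRadius (hα : 0 < α) (hh : 0 ≤ h) :
    h ^ n ≤ ∏ k ∈ Finset.range n, cartanRadius α h n (k + 1) := by
  rcases n.eq_zero_or_pos with rfl | hn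
  · simp
  refine (Real.rpow_le_rpow_iff (by positivity)
    (Finset.prod_nonneg fun _ _ ↦ cartanRadius_nonneg hh) hα).1 ?_
  have hfactorial : (n : ℝ) ^ n ≤ n.factorial * Real.exp n :=
    (div_le_iff₀' (by positivity)).1 (Real.pow_div_factorial_le_exp n (by positivity) n)
  calc (h ^ n) ^ α = (h ^ α) ^ n := (Real.rpow_pow_comm hh α n).symm
    _ = n ^ n * (h ^ α) ^ n / n ^ n := by field_simp
    _ ≤ (n.factorial * Real.exp n) * (h ^ α) ^ n / n ^ n := by gcongr
    _ = n.factorial * (Real.exp 1 * h ^ α / n) ^ n := by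
      rw [div_pow, mul_pow, Real.exp_one_pow]
      ring
    _ = ∏ k ∈ Finset.range n, cartanRadius α h n (k + 1) ^ α := by
      simp only [cartanRadius_rpow hα hh, Finset.prod_mul_distrib, Finset.prod_const,
        Finset.card_range, ← Nat.cast_prod, Finset.prod_range_add_one_eq_factorial]
    _ = (∏ k ∈ Finset.range n, cartanRadius α h n (k + 1)) ^ α :=
      Real.finsetProd_rpow _ _ (fun _ _ ↦ cartanRadius_nonneg hh) α

theorem sum_two_mul_cartanRadius_rpow_le (hα : 0 < α) (hh : 0 ≤ h) (hn : 0 < n) {l : List ℕ}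
    (hl : l.sum ≤ n) :
    (l.map fun k ↦ (2 * cartanRadius α h n k) ^ α).sum ^ (1 / α) ≤ 2 * h * Real.exp (1 / α) := by
  have hnonneg : 0 ≤ (l.map fun k ↦ (2 * cartanRadius α h n k) ^ α).sum :=
    List.sum_nonneg (List.forall_mem_map.2 fun k _ ↦
      Real.rpow_nonneg (mul_nonneg zero_le_two (cartanRadius_nonneg hh)) α)
  rw [one_div, Real.rpow_inv_le_iff_of_pos hnonneg (by positivity) hα]
  calc (l.map fun k ↦ (2 * cartanRadius α h n k) ^ α).sum
    _ = (l.map fun k : ℕ ↦ (k : ℝ) * (2 ^ α * (Real.exp 1 * h ^ α / n))).sum := by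
      simp only [Real.mul_rpow zero_le_two (cartanRadius_nonneg hh), cartanRadius_rpow hα hh,
        mul_left_comm]
    _ = l.sum * (2 ^ α * (Real.exp 1 * h ^ α / n)) := by
      rw [List.sum_map_mul_right, Nat.cast_list_sum]
    _ ≤ n * (2 ^ α * (Real.exp 1 * h ^ α / n)) := by gcongr
    _ = 2 ^ α * h ^ α * Real.exp 1 := by field_simp
    _ = (2 * h * Real.exp α⁻¹) ^ α := by
      rw [Real.mul_rpow (by positivity) (by positivity), Real.mul_rpow zero_le_two hh,
        ← Real.exp_mul, inv_mul_cancel₀ hα.ne']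

end cartanRadius

theorem exists_pow_le_prod_dist_of_lt_cartanMeasure {α h : ℝ} (hα : 0 < α) (hh : 0 < h)
    {Z : Set ℂ} {S : Multiset ℂ} (hZ : 2 * h * Real.exp (1 / α) < cartanMeasure S.card α Z) :
    ∃ z ∈ Z, h ^ S.card ≤ (S.map (dist z)).prod := by
  have hcard : 0 < S.card := by
    refine Nat.pos_of_ne_zero fun h0 ↦ (cartanMeasure_zero_le hα.ne' Z).not_gt ?_
    rw [h0] at hZ
    exact lt_trans (by positivity) hZ
  obtain ⟨L, hL_pos, hL_sum, hL⟩ :=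
    exists_list_forall_countP_dist_lt (monotone_cartanRadius (n := S.card) hα hh.le) S
  have hL_length : L.length ≤ S.card := by
    refine le_trans ?_ hL_sum
    simpa using List.length_le_sum_of_one_le (L.map Prod.snd) (List.forall_mem_map.2 hL_pos)
  obtain ⟨z, hz, hzL⟩ : ∃ z ∈ Z, ∀ a ∈ L, 2 * cartanRadius α h S.card a.2 < dist z a.1 := by
    by_contra! hcover
    have hle := cartanMeasure_le_of_list (α := α)
      (L := L.map fun a ↦ (a.1, 2 * cartanRadius α h S.card a.2)) (by simpa using hL_length)
      (List.forall_mem_map.2 fun a ha ↦ mul_pos two_pos (cartanRadius_pos hh hcard (hL_pos a ha)))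
      (by simpa using hcover)
    have hsum := sum_two_mul_cartanRadius_rpow_le hα hh.le hcard hL_sum
    rw [List.map_map] at hle hsum
    exact (hZ.trans_le hle).not_ge hsum
  refine ⟨z, hz, (pow_le_prod_range_cartanRadius hα hh.le).trans ?_⟩
  have hcount (k : ℕ) (hk : 0 < k) :
      (S.map (dist z)).countP (· ≤ cartanRadius α h S.card k) < k := by
    rw [Multiset.countP_map, ← Multiset.countP_eq_card_filter]
    exact hL z hzL k hk
  simpa only [Multiset.card_map] using prod_range_le_multiset_prod_of_countP_lt
    (fun _ ↦ cartanRadius_nonneg hh.le) (by simp) hcount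

end CartanLemma

section Isoperimetric

variable {a b : ℝ} {y y' : ℝ → ℂ}

theorem norm_fourierCoeffOn_le_of_hasDerivAt (hab : a < b) (hy : ∀ x, HasDerivAt y (y' x) x)
    (hy' : Continuous y') (hclosed : y a = y b) {n : ℤ} (hn : n ≠ 0) :
    ‖fourierCoeffOn hab y n‖ ≤ (b - a) / (2 * π) * ‖fourierCoeffOn hab y' n‖ := by
  have hcoeff := fourierCoeffOn_of_hasDerivAt hab hn (fun x _ ↦ hy x) (hy'.intervalIntegrable a b)
  rw [hclosed, sub_self, mul_zero, zero_sub] at hcoeff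
  have hn1 : (1 : ℝ) ≤ |(n : ℝ)| := by exact_mod_cast Int.one_le_abs hn
  have hab' : 0 < b - a := sub_pos.2 hab
  calc ‖fourierCoeffOn hab y n‖
    _ = (b - a) / (2 * π * |(n : ℝ)|) * ‖fourierCoeffOn hab y' n‖ := by
      rw [hcoeff, ← ofReal_sub]
      simp only [norm_mul, norm_neg, norm_div, norm_one, norm_real, norm_I, norm_intCast,
        Real.norm_eq_abs, abs_of_pos hab', abs_of_pos Real.pi_pos, Complex.norm_ofNat]
      ring
    _ ≤ (b - a) / (2 * π) * ‖fourierCoeffOn hab y' n‖ := by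
      gcongr ?_ * _
      exact div_le_div_of_nonneg_left hab'.le (by positivity)
        (le_mul_of_one_le_right (by positivity) hn1)

theorem integral_norm_sq_le_of_integral_eq_zero (hab : a < b) (hy : ∀ x, HasDerivAt y (y' x) x)
    (hy' : Continuous y') (hclosed : y a = y b) (hmean : ∫ x in a..b, y x = 0) :
    ∫ x in a..b, ‖y x‖ ^ 2 ≤ ((b - a) / (2 * π)) ^ 2 * ∫ x in a..b, ‖y' x‖ ^ 2 := by
  have hyc : Continuous y := continuous_iff_continuousAt.2 fun x ↦ (hy x).continuousAt
  have hmemLp {u : ℝ → ℂ} (hu : Continuous u) : MemLp u 2 (volume.restrict (Ioc a b)) :=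
    (memLp_two_iff_integrable_sq_norm hu.aestronglyMeasurable).2
      (hu.norm.pow 2).integrableOn_Ioc
  have hcoeff (n : ℤ) : ‖fourierCoeffOn hab y n‖ ^ 2 ≤
      ((b - a) / (2 * π)) ^ 2 * ‖fourierCoeffOn hab y' n‖ ^ 2 := by
    rw [← mul_pow]
    by_cases hn : n = 0
    · have : fourierCoeffOn hab y n = 0 := by simp [hn, fourierCoeffOn_eq_integral, hmean]
      rw [this, norm_zero, zero_pow two_ne_zero]
      positivity
    · gcongr
      exact norm_fourierCoeffOn_le_of_hasDerivAt hab hy hy' hclosed hn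
  have hsum := hasSum_le hcoeff (hasSum_sq_fourierCoeffOn hab (hmemLp hyc))
    ((hasSum_sq_fourierCoeffOn hab (hmemLp hy')).mul_left _)
  rw [smul_eq_mul, smul_eq_mul, mul_left_comm] at hsum
  exact le_of_mul_le_mul_left hsum (inv_pos.2 (sub_pos.2 hab))

theorem im_conj_mul_le {c : ℝ} (hc : 0 < c) (z w m : ℂ) :
    (conj z * w).im ≤ (conj m * w).im + (c⁻¹ / 2 * ‖z - m‖ ^ 2 + c / 2 * ‖w‖ ^ 2) := by
  have hsplit : conj z * w = conj m * w + conj (z - m) * w := by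
    rw [map_sub]
    ring
  have him : (conj (z - m) * w).im ≤ ‖z - m‖ * ‖w‖ := by
    refine (im_le_norm _).trans_eq ?_
    rw [norm_mul, norm_conj]
  have hamgm : ‖z - m‖ * ‖w‖ ≤ c⁻¹ / 2 * ‖z - m‖ ^ 2 + c / 2 * ‖w‖ ^ 2 := by
    have := mul_nonneg (inv_nonneg.2 hc.le) (sq_nonneg (‖z - m‖ - c * ‖w‖))
    field_simp at this ⊢
    linarith
  rw [hsplit, add_im]
  linarith

theorem integral_conj_mul_im_le (hab : a < b) (hy : ∀ x, HasDerivAt y (y' x) x)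
    (hy' : Continuous y') (hclosed : y a = y b) :
    ∫ x in a..b, (conj (y x) * y' x).im ≤ (b - a) / (2 * π) * ∫ x in a..b, ‖y' x‖ ^ 2 := by
  have hyc : Continuous y := continuous_iff_continuousAt.2 fun x ↦ (hy x).continuousAt
  have hab' : 0 < b - a := sub_pos.2 hab
  set m : ℂ := (b - a)⁻¹ • ∫ x in a..b, y x with hm
  set c : ℝ := (b - a) / (2 * π)
  have hc0 : 0 < c := by positivity
  have hmean : ∫ x in a..b, (y x - m) = 0 := by
    rw [intervalIntegral.integral_sub (hyc.intervalIntegrable _ _) (by simp),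
      intervalIntegral.integral_const, hm, smul_inv_smul₀ hab'.ne', sub_self]
  have hwirtinger : ∫ x in a..b, ‖y x - m‖ ^ 2 ≤ c ^ 2 * ∫ x in a..b, ‖y' x‖ ^ 2 :=
    integral_norm_sq_le_of_integral_eq_zero hab (fun x ↦ (hy x).sub_const m) hy' (by rw [hclosed])
      hmean
  have hconst : ∫ x in a..b, (conj m * y' x).im = 0 := by
    have hy'_int : ∫ x in a..b, y' x = 0 := by
      rw [intervalIntegral.integral_eq_sub_of_hasDerivAt (fun x _ ↦ hy x)
        (hy'.intervalIntegrable a b), hclosed, sub_self]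
    have hcomm := imCLM.intervalIntegral_comp_comm (f := fun x ↦ conj m * y' x) (a := a) (b := b)
      (μ := volume) (Continuous.intervalIntegrable (by fun_prop) _ _)
    rwa [intervalIntegral.integral_const_mul, hy'_int, mul_zero, map_zero] at hcomm
  calc ∫ x in a..b, (conj (y x) * y' x).im
    _ ≤ ∫ x in a..b, ((conj m * y' x).im + (c⁻¹ / 2 * ‖y x - m‖ ^ 2 + c / 2 * ‖y' x‖ ^ 2)) := by
      refine intervalIntegral.integral_mono hab.le (Continuous.intervalIntegrable (by fun_prop) _ _)
        (Continuous.intervalIntegrable (by fun_prop) _ _) fun x ↦ ?_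
      exact im_conj_mul_le hc0 (y x) (y' x) m
    _ = c⁻¹ / 2 * (∫ x in a..b, ‖y x - m‖ ^ 2) + c / 2 * ∫ x in a..b, ‖y' x‖ ^ 2 := by
      rw [intervalIntegral.integral_add, intervalIntegral.integral_add, hconst, zero_add,
        intervalIntegral.integral_const_mul, intervalIntegral.integral_const_mul] <;>
      exact Continuous.intervalIntegrable (by fun_prop) _ _
    _ ≤ c⁻¹ / 2 * (c ^ 2 * ∫ x in a..b, ‖y' x‖ ^ 2) + c / 2 * ∫ x in a..b, ‖y' x‖ ^ 2 := by gcongr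
    _ = c * ∫ x in a..b, ‖y' x‖ ^ 2 := by field_simp; ring

theorem one_sub_tanh_sq_pos (x : ℝ) : 0 < 1 - Real.tanh x ^ 2 :=
  sub_pos.2 (Real.tanh_sq_lt_one x)

theorem hasDerivAt_tanh (x : ℝ) : HasDerivAt Real.tanh (1 - Real.tanh x ^ 2) x := by
  have hquot := (Real.hasDerivAt_sinh x).fun_div (Real.hasDerivAt_cosh x) (Real.cosh_pos x).ne'
  simp only [← Real.tanh_eq_sinh_div_cosh] at hquot
  refine hquot.congr_deriv ?_
  have := (Real.cosh_pos x).ne'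
  rw [Real.tanh_eq_sinh_div_cosh]
  field_simp

@[fun_prop]
theorem continuous_tanh : Continuous Real.tanh :=
  continuous_iff_continuousAt.2 fun x ↦ (hasDerivAt_tanh x).continuousAt

theorem hasDerivAt_log_cosh (x : ℝ) :
    HasDerivAt (fun x ↦ Real.log (Real.cosh x)) (Real.tanh x) x := by
  rw [Real.tanh_eq_sinh_div_cosh]
  exact (Real.hasDerivAt_cosh x).log (Real.cosh_pos x).ne'

/-- For `σ = 1` and `σ = -1`, the two coordinates, scaled by `√2`, of a point of `S³ ⊆ ℂ²` over
the point of the Riemann sphere with stereographic coordinate `exp w`; the fibre of the Hopf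
fibration is parametrised by the phase `τ`. -/
noncomputable def sphereLift (σ : ℝ) (w : ℂ) (τ : ℝ) : ℂ :=
  exp ((σ / 2 : ℝ) * w - (Real.log (Real.cosh w.re) / 2 : ℝ) - I * τ)

theorem norm_sphereLift_sq {σ : ℝ} (hσ : σ = 1 ∨ σ = -1) (w : ℂ) (τ : ℝ) :
    ‖sphereLift σ w τ‖ ^ 2 = 1 + σ * Real.tanh w.re := by
  have hre : ((σ / 2 : ℝ) * w - (Real.log (Real.cosh w.re) / 2 : ℝ) - I * τ).re =
      (σ * w.re - Real.log (Real.cosh w.re)) / 2 := by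
    rw [sub_re, sub_re, re_ofReal_mul, ofReal_re, re_mul_ofReal, I_re]
    ring
  have hcosh := (Real.cosh_pos w.re).ne'
  rw [sphereLift, norm_exp, hre, ← Real.exp_nat_mul, Nat.cast_ofNat, mul_div_cancel₀ _ two_ne_zero,
    Real.exp_sub, Real.exp_log (Real.cosh_pos _), Real.tanh_eq_sinh_div_cosh]
  rcases hσ with rfl | rfl
  · rw [one_mul, ← Real.cosh_add_sinh]
    field_simp
  · rw [neg_one_mul, ← Real.cosh_sub_sinh]
    field_simp
    ring

theorem hasDerivAt_sphereLift {γ : ℝ → ℂ} {τ : ℝ → ℝ} {v : ℂ} {τ' x : ℝ} (σ : ℝ)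
    (hγ : HasDerivAt γ v x) (hτ : HasDerivAt τ τ' x) :
    HasDerivAt (fun x ↦ sphereLift σ (γ x) (τ x)) (sphereLift σ (γ x) (τ x) *
      ⟨v.re * (σ - Real.tanh (γ x).re) / 2, σ * v.im / 2 - τ'⟩) x := by
  have hre : HasDerivAt (fun x ↦ (γ x).re) v.re x := reCLM.hasFDerivAt.comp_hasDerivAt x hγ
  have hlog := ((hasDerivAt_log_cosh _).comp x hre).div_const 2
  have hexp := (((hγ.const_mul ((σ / 2 : ℝ) : ℂ)).sub hlog.ofReal_comp).sub
    (hτ.ofReal_comp.const_mul I)).cexp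
  refine hexp.congr_deriv ?_
  congr 1
  apply Complex.ext <;>
  · simp only [sub_re, sub_im, re_ofReal_mul, im_ofReal_mul, re_mul_ofReal, im_mul_ofReal,
      ofReal_re, ofReal_im, I_re, I_im]
    ring

-- The phase `τ` is horizontal for the Hopf fibration up to the drift `κ`, and `κ` is the
-- holonomy that closes up the lift.
theorem integral_sphereLift_le {γ γ' : ℝ → ℂ} (hab : a < b) (hγ : ∀ x, HasDerivAt γ (γ' x) x)
    (hγ' : Continuous γ') (hclosed : γ a = γ b) {κ : ℝ}
    (hκ : ∫ x in a..b, Real.tanh (γ x).re * (γ' x).im = 2 * (b - a) * κ) {σ : ℝ}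
    (hσ : σ = 1 ∨ σ = -1) :
    ∫ x in a..b, (1 + σ * Real.tanh (γ x).re) *
        ((γ' x).im * (σ - Real.tanh (γ x).re) / 2 + κ) ≤
      (b - a) / (2 * π) * ∫ x in a..b, (1 + σ * Real.tanh (γ x).re) *
        (‖γ' x‖ ^ 2 * (σ - Real.tanh (γ x).re) ^ 2 / 4 +
          (γ' x).im * (σ - Real.tanh (γ x).re) * κ + κ ^ 2) := by
  have hγc : Continuous γ := continuous_iff_continuousAt.2 fun x ↦ (hγ x).continuousAt
  let τ' : ℝ → ℝ := fun x ↦ Real.tanh (γ x).re * (γ' x).im / 2 - κ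
  have hτ' : Continuous τ' := by fun_prop
  let τ : ℝ → ℝ := fun x ↦ ∫ u in a..x, τ' u
  have hτ (x : ℝ) : HasDerivAt τ (τ' x) x := (hτ'.integral_hasStrictDerivAt a x).hasDerivAt
  have hτ_closed : τ a = τ b := by
    simp only [τ, τ', intervalIntegral.integral_same]
    rw [intervalIntegral.integral_sub (Continuous.intervalIntegrable (by fun_prop) _ _) (by simp),
      intervalIntegral.integral_div, hκ, intervalIntegral.integral_const, smul_eq_mul]
    ring
  let y : ℝ → ℂ := fun x ↦ sphereLift σ (γ x) (τ x)
  let w : ℝ → ℂ := fun x ↦ ⟨(γ' x).re * (σ - Real.tanh (γ x).re) / 2, σ * (γ' x).im / 2 - τ' x⟩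
  have hy (x : ℝ) : HasDerivAt y (y x * w x) x := hasDerivAt_sphereLift σ (hγ x) (hτ x)
  have hyc : Continuous y := continuous_iff_continuousAt.2 fun x ↦ (hy x).continuousAt
  have hw : Continuous w := by
    simp only [w, mk_eq_add_mul_I]
    fun_prop
  have hy_closed : y a = y b := by simp only [y, hclosed, hτ_closed]
  refine (integral_conj_mul_im_le hab hy (hyc.mul hw) hy_closed).trans_eq' ?_ |>.trans_eq ?_
  · refine intervalIntegral.integral_congr fun x _ ↦ ?_
    simp only [y, w, τ']
    rw [← mul_assoc, ← normSq_eq_conj_mul_self, im_ofReal_mul, normSq_eq_norm_sq,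
      norm_sphereLift_sq hσ]
    ring
  · congr 1
    refine intervalIntegral.integral_congr fun x _ ↦ ?_
    simp only [y, w, τ']
    rw [norm_mul, mul_pow, norm_sphereLift_sq hσ, ← normSq_eq_norm_sq, ← normSq_eq_norm_sq,
      normSq_apply, normSq_apply]
    ring

theorem tanh_integral_mul_sub_le {γ γ' : ℝ → ℂ} (hab : a < b) (hγ : ∀ x, HasDerivAt γ (γ' x) x)
    (hγ' : Continuous γ') (hclosed : γ a = γ b) :
    (∫ x in a..b, Real.tanh (γ x).re * (γ' x).im) *
        (4 * π - ∫ x in a..b, Real.tanh (γ x).re * (γ' x).im) ≤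
      (b - a) * ∫ x in a..b, (1 - Real.tanh (γ x).re ^ 2) * ‖γ' x‖ ^ 2 := by
  have hγc : Continuous γ := continuous_iff_continuousAt.2 fun x ↦ (hγ x).continuousAt
  have hab' : 0 < b - a := sub_pos.2 hab
  set A := ∫ x in a..b, Real.tanh (γ x).re * (γ' x).im
  set N := ∫ x in a..b, (1 - Real.tanh (γ x).re ^ 2) * ‖γ' x‖ ^ 2 with hN
  set κ := A / (2 * (b - a)) with hκ_def
  have hκ : A = 2 * (b - a) * κ := by rw [hκ_def]; field_simp
  have hsum := add_le_add (integral_sphereLift_le hab hγ hγ' hclosed hκ (Or.inl rfl))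
    (integral_sphereLift_le hab hγ hγ' hclosed hκ (Or.inr rfl))
  rw [← mul_add, ← intervalIntegral.integral_add, ← intervalIntegral.integral_add] at hsum
  rotate_left 1
  iterate 4 exact Continuous.intervalIntegrable (by fun_prop) _ _
  have hleft (x : ℝ) : (1 + 1 * Real.tanh (γ x).re) *
        ((γ' x).im * (1 - Real.tanh (γ x).re) / 2 + κ) +
      (1 + -1 * Real.tanh (γ x).re) * ((γ' x).im * (-1 - Real.tanh (γ x).re) / 2 + κ) = 2 * κ := by
    ring
  have hright (x : ℝ) : (1 + 1 * Real.tanh (γ x).re) *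
        (‖γ' x‖ ^ 2 * (1 - Real.tanh (γ x).re) ^ 2 / 4 +
          (γ' x).im * (1 - Real.tanh (γ x).re) * κ + κ ^ 2) +
      (1 + -1 * Real.tanh (γ x).re) * (‖γ' x‖ ^ 2 * (-1 - Real.tanh (γ x).re) ^ 2 / 4 +
          (γ' x).im * (-1 - Real.tanh (γ x).re) * κ + κ ^ 2) =
      1 / 2 * ((1 - Real.tanh (γ x).re ^ 2) * ‖γ' x‖ ^ 2) + 2 * κ ^ 2 := by
    ring
  simp only [hleft, hright] at hsum
  rw [intervalIntegral.integral_add (Continuous.intervalIntegrable (by fun_prop) _ _) (by simp),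
    intervalIntegral.integral_const, intervalIntegral.integral_const,
    intervalIntegral.integral_const_mul, ← hN, smul_eq_mul, smul_eq_mul] at hsum
  have hA : 4 * π * A ≤ (b - a) * N + A ^ 2 := by
    rw [hκ]
    field_simp at hsum
    linarith [mul_le_mul_of_nonneg_left hsum hab'.le]
  linarith

end Isoperimetric

section CircleAverages

variable {E : Type*} [NormedAddCommGroup E] {F : ℂ → E} {R s : ℝ}

theorem circleMap_zero_mem_ball {r : ℝ} (hr : |r| < R) (θ : ℝ) :
    circleMap 0 r θ ∈ ball (0 : ℂ) R := by
  rwa [mem_ball_zero_iff, norm_circleMap_zero]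

theorem continuous_comp_circleMap {X : Type*} [TopologicalSpace X] {F : ℂ → X}
    (hF : ContinuousOn F (ball 0 R)) {r : ℝ} (hr : |r| < R) :
    Continuous fun θ ↦ F (circleMap 0 r θ) :=
  hF.comp_continuous (continuous_circleMap 0 r) (circleMap_zero_mem_ball hr)

theorem circleIntegrable_of_continuousOn_ball (hF : ContinuousOn F (ball 0 R)) {r : ℝ}
    (hr : |r| < R) : CircleIntegrable F 0 r :=
  (hF.mono (sphere_subset_ball hr)).circleIntegrable'

variable [NormedSpace ℝ E]

theorem continuousOn_fderiv_apply (hF : ContDiffOn ℝ 1 F (ball 0 R)) {v : ℂ → ℂ}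
    (hv : Continuous v) : ContinuousOn (fun z ↦ fderiv ℝ F z (v z)) (ball 0 R) :=
  (hF.continuousOn_fderiv_of_isOpen isOpen_ball le_rfl).clm_apply hv.continuousOn

theorem hasDerivAt_circleMap_exp (s θ : ℝ) :
    HasDerivAt (fun s ↦ circleMap 0 (Real.exp s) θ) (circleMap 0 (Real.exp s) θ) s := by
  simpa only [circleMap_zero] using (Real.hasDerivAt_exp s).ofReal_comp.mul_const (exp (θ * I))

theorem hasDerivAt_circleAverage_exp (hF : ContDiffOn ℝ 1 F (ball 0 R)) (hs : Real.exp s < R) :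
    HasDerivAt (fun s ↦ Real.circleAverage F 0 (Real.exp s))
      (Real.circleAverage (fun z ↦ fderiv ℝ F z z) 0 (Real.exp s)) s := by
  have hD := continuousOn_fderiv_apply hF continuous_id
  obtain ⟨r, hsr, hrR⟩ := exists_between hs
  obtain ⟨C, hC⟩ := (isCompact_closedBall (0 : ℂ) r).exists_bound_of_continuousOn
    (hD.mono (closedBall_subset_ball hrR))
  have hexp {x : ℝ} (hx : Real.exp x < r) : |Real.exp x| < R := by
    rw [Real.abs_exp]
    exact hx.trans hrR
  have hnhds : {x | Real.exp x < r} ∈ 𝓝 s :=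
    (isOpen_Iio.preimage Real.continuous_exp).mem_nhds hsr
  refine (intervalIntegral.hasDerivAt_integral_of_dominated_loc_of_deriv_le (bound := fun _ ↦ C)
    (F' := fun x θ ↦ fderiv ℝ F (circleMap 0 (Real.exp x) θ) (circleMap 0 (Real.exp x) θ))
    hnhds ?_ ?_ ?_ ?_ (by simp) ?_).2.const_smul (2 * π)⁻¹
  · filter_upwards [hnhds] with x hx
    exact (continuous_comp_circleMap hF.continuousOn (hexp hx)).aestronglyMeasurable
  · exact (continuous_comp_circleMap hF.continuousOn (hexp hsr)).intervalIntegrable _ _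
  · exact (continuous_comp_circleMap hD (hexp hsr)).aestronglyMeasurable
  · refine .of_forall fun θ _ x hx ↦ hC _ ?_
    rw [mem_closedBall_zero_iff, norm_circleMap_zero, Real.abs_exp]
    exact hx.le
  · refine .of_forall fun θ _ x hx ↦ ?_
    have hz := circleMap_zero_mem_ball (hexp hx) θ
    exact ((hF.differentiableOn one_ne_zero).differentiableAt
      (isOpen_ball.mem_nhds hz)).hasFDerivAt.comp_hasDerivAt x (hasDerivAt_circleMap_exp x θ)

theorem circleAverage_fderiv_mul_I [CompleteSpace E] (hF : ContDiffOn ℝ 1 F (ball 0 R)) {r : ℝ}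
    (hr : |r| < R) : Real.circleAverage (fun z ↦ fderiv ℝ F z (z * I)) 0 r = 0 := by
  have hD := continuousOn_fderiv_apply hF (continuous_mul_const I)
  have hderiv (θ : ℝ) : HasDerivAt (fun θ ↦ F (circleMap 0 r θ))
      (fderiv ℝ F (circleMap 0 r θ) (circleMap 0 r θ * I)) θ :=
    ((hF.differentiableOn one_ne_zero).differentiableAt (isOpen_ball.mem_nhds
      (circleMap_zero_mem_ball hr θ))).hasFDerivAt.comp_hasDerivAt θ (hasDerivAt_circleMap 0 r θ)
  rw [Real.circleAverage_def, intervalIntegral.integral_eq_sub_of_hasDerivAt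
    (fun θ _ ↦ hderiv θ) ((continuous_comp_circleMap hD hr).intervalIntegrable _ _)]
  simp [circleMap]

theorem tendsto_circleAverage_exp_atBot [CompleteSpace E] (hF : ContinuousOn F (ball 0 R))
    (hR : 0 < R) :
    Tendsto (fun s ↦ Real.circleAverage F 0 (Real.exp s)) atBot (𝓝 (F 0)) := by
  have hcont : ContinuousOn (Real.circleAverage F 0) (Ico 0 R) := by
    refine Real.ContinuousOn.circleAverage (hF.mono fun z hz ↦ ?_) fun r hr ↦ hr.1
    rw [mem_ofPred_eq, sub_zero] at hz
    exact mem_ball_zero_iff.2 hz.2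
  have hexp : Tendsto Real.exp atBot (𝓝[Ico 0 R] 0) :=
    tendsto_nhdsWithin_iff.2 ⟨Real.tendsto_exp_atBot,
      (Real.tendsto_exp_atBot.eventually_lt_const hR).mono fun s hs ↦ ⟨(Real.exp_pos s).le, hs⟩⟩
  rw [← Real.circleAverage_zero (f := F) (c := 0)]
  exact (hcont 0 ⟨le_rfl, hR⟩).tendsto.comp hexp

end CircleAverages

section SphericalArea

variable {ζ : ℂ → ℂ} {s : ℝ}

/-- The spherical area, divided by `2π` and counted with multiplicity, of the image of the disk
of radius `exp s` under `ζ`, for the metric `|dζ| / cosh (re ζ)` that `exp` pulls back from the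
sphere. It is encoded as a boundary integral, by Stokes' theorem. -/
noncomputable def sphericalArea (ζ : ℂ → ℂ) (s : ℝ) : ℝ :=
  Real.circleAverage (fun z ↦ Real.tanh (ζ z).re * (z * deriv ζ z).re) 0 (Real.exp s)

/-- The spherical energy density of `ζ` on circles centred at the origin, in logarithmic polar
coordinates. -/
noncomputable def sphericalDensity (ζ : ℂ → ℂ) (z : ℂ) : ℝ :=
  (1 - Real.tanh (ζ z).re ^ 2) * ‖z * deriv ζ z‖ ^ 2

theorem abs_exp_lt_one (hs : s < 0) : |Real.exp s| < 1 := by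
  rwa [Real.abs_exp, Real.exp_lt_one_iff]

theorem contDiff_tanh {n : WithTop ℕ∞} : ContDiff ℝ n Real.tanh := by
  have : Real.tanh = fun x ↦ Real.sinh x / Real.cosh x := funext Real.tanh_eq_sinh_div_cosh
  rw [this]
  exact Real.contDiff_sinh.div Real.contDiff_cosh fun x ↦ (Real.cosh_pos x).ne'

theorem contDiff_log_cosh {n : WithTop ℕ∞} : ContDiff ℝ n fun x ↦ Real.log (Real.cosh x) :=
  Real.contDiff_cosh.log fun x ↦ (Real.cosh_pos x).ne'

theorem hasFDerivAt_comp_clm {ℓ : ℂ →L[ℝ] ℝ} {φ : ℝ → ℝ} {h : ℂ → ℂ} {φ' : ℝ} {h' z : ℂ}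
    (hφ : HasDerivAt φ φ' (ℓ (h z))) (hh : HasDerivAt h h' z) :
    HasFDerivAt (fun z ↦ φ (ℓ (h z))) (φ' • (ℓ ∘L (h' • (1 : ℂ →L[ℝ] ℂ)))) z :=
  hφ.comp_hasFDerivAt z (ℓ.hasFDerivAt.comp z hh.complexToReal_fderiv)

theorem contDiffOn_comp_clm {φ : ℝ → ℝ} (hφ : ContDiff ℝ 1 φ) {h : ℂ → ℂ} {U : Set ℂ}
    (hh : AnalyticOnNhd ℂ h U) (hU : IsOpen U) (ℓ : ℂ →L[ℝ] ℝ) :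
    ContDiffOn ℝ 1 (fun z ↦ φ (ℓ (h z))) U :=
  (hφ.comp ℓ.contDiff).comp_contDiffOn
    ((hh.differentiableOn.contDiffOn (n := 1) hU).restrict_scalars ℝ)

theorem hasDerivAt_circleAverage_log_cosh (hζ : AnalyticOnNhd ℂ ζ (ball 0 1)) (hs : s < 0) :
    HasDerivAt (fun s ↦ Real.circleAverage (fun z ↦ Real.log (Real.cosh (ζ z).re)) 0 (Real.exp s))
      (sphericalArea ζ s) s := by
  refine (hasDerivAt_circleAverage_exp (contDiffOn_comp_clm contDiff_log_cosh hζ isOpen_ball reCLM)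
    (Real.exp_lt_one_iff.2 hs)).congr_deriv ?_
  refine Real.circleAverage_congr_sphere fun z hz ↦ ?_
  have hz1 : z ∈ ball (0 : ℂ) 1 := sphere_subset_ball (abs_exp_lt_one hs) hz
  have hderiv := hasFDerivAt_comp_clm (ℓ := reCLM) (hasDerivAt_log_cosh _)
    (hζ z hz1).differentiableAt.hasDerivAt
  refine (DFunLike.congr_fun hderiv.fderiv z).trans ?_
  simp [mul_comm z]

theorem fderiv_tanh_re_mul_clm {q : ℂ → ℂ} {z : ℂ} (hζ : DifferentiableAt ℂ ζ z)
    (hq : DifferentiableAt ℂ q z) (ℓ : ℂ →L[ℝ] ℝ) (v : ℂ) :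
    fderiv ℝ (fun z ↦ Real.tanh (ζ z).re * ℓ (q z)) z v =
      (1 - Real.tanh (ζ z).re ^ 2) * (v * deriv ζ z).re * ℓ (q z) +
        Real.tanh (ζ z).re * ℓ (v * deriv q z) := by
  have htanh := hasFDerivAt_comp_clm (ℓ := reCLM) (hasDerivAt_tanh _) hζ.hasDerivAt
  have hℓq := hasFDerivAt_comp_clm (ℓ := ℓ) (hasDerivAt_id _) hq.hasDerivAt
  refine (DFunLike.congr_fun (htanh.fun_mul hℓq).fderiv v).trans ?_
  simp only [reCLM_apply, id_eq, one_smul, mul_comm v, _root_.add_apply,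
    _root_.smul_apply, ContinuousLinearMap.comp_apply, one_apply_eq_self, smul_eq_mul]
  ring

theorem continuousOn_sphericalDensity (hζ : AnalyticOnNhd ℂ ζ (ball 0 1)) :
    ContinuousOn (sphericalDensity ζ) (ball 0 1) := by
  have hζc := hζ.continuousOn
  have hζ'c := hζ.deriv.continuousOn
  unfold sphericalDensity
  fun_prop

theorem hasDerivAt_sphericalArea (hζ : AnalyticOnNhd ℂ ζ (ball 0 1)) (hs : s < 0) :
    HasDerivAt (sphericalArea ζ) (Real.circleAverage (sphericalDensity ζ) 0 (Real.exp s)) s := by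
  have hr := abs_exp_lt_one hs
  let q : ℂ → ℂ := fun z ↦ z * deriv ζ z
  have hq : AnalyticOnNhd ℂ q (ball 0 1) := analyticOnNhd_id.mul hζ.deriv
  have hsmooth (ℓ : ℂ →L[ℝ] ℝ) :
      ContDiffOn ℝ 1 (fun z ↦ Real.tanh (ζ z).re * ℓ (q z)) (ball 0 1) :=
    (contDiffOn_comp_clm contDiff_tanh hζ isOpen_ball reCLM).mul
      (contDiffOn_comp_clm contDiff_id hq isOpen_ball ℓ)
  refine (hasDerivAt_circleAverage_exp (hsmooth reCLM) (Real.exp_lt_one_iff.2 hs)).congr_deriv ?_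
  have hrotation := circleAverage_fderiv_mul_I (hsmooth imCLM) hr
  rw [← add_zero (Real.circleAverage (sphericalDensity ζ) _ _), ← hrotation,
    ← Real.circleAverage_add
      (circleIntegrable_of_continuousOn_ball (continuousOn_sphericalDensity hζ) hr)
      (circleIntegrable_of_continuousOn_ball
        (continuousOn_fderiv_apply (hsmooth imCLM) (continuous_mul_const I)) hr)]
  refine Real.circleAverage_congr_sphere fun z hz ↦ ?_
  have hz1 : z ∈ ball (0 : ℂ) 1 := sphere_subset_ball hr hz
  have hζz := (hζ z hz1).differentiableAt
  have hqz := (hq z hz1).differentiableAt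
  have hnorm : ‖q z‖ ^ 2 = (q z).re ^ 2 + (q z).im ^ 2 := by
    rw [← normSq_eq_norm_sq, normSq_apply]
    ring
  rw [Pi.add_apply, fderiv_tanh_re_mul_clm hζz hqz reCLM, fderiv_tanh_re_mul_clm hζz hqz imCLM]
  change _ = (1 - Real.tanh (ζ z).re ^ 2) * ‖q z‖ ^ 2 + _
  rw [hnorm]
  simp only [q, reCLM_apply, imCLM_apply, mul_right_comm z I, mul_I_re, mul_I_im]
  ring

theorem sphericalArea_mul_two_sub_le (hζ : AnalyticOnNhd ℂ ζ (ball 0 1)) (hs : s < 0) :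
    sphericalArea ζ s * (2 - sphericalArea ζ s) ≤
      Real.circleAverage (sphericalDensity ζ) 0 (Real.exp s) := by
  have hr := abs_exp_lt_one hs
  set r := Real.exp s with hr_def
  let γ : ℝ → ℂ := fun θ ↦ ζ (circleMap 0 r θ)
  let γ' : ℝ → ℂ := fun θ ↦ I * (circleMap 0 r θ * deriv ζ (circleMap 0 r θ))
  have hγ (θ : ℝ) : HasDerivAt γ (γ' θ) θ := by
    refine ((hζ _ (circleMap_zero_mem_ball hr θ)).differentiableAt.hasDerivAt.comp θ
      (hasDerivAt_circleMap 0 r θ)).congr_deriv ?_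
    simp only [γ']
    ring
  have hγ' : Continuous γ' := continuous_const.mul
    (continuous_comp_circleMap (continuousOn_id.mul hζ.deriv.continuousOn) hr)
  have hisop := tanh_integral_mul_sub_le Real.two_pi_pos hγ hγ' (by simp [γ, circleMap])
  have harea : ∫ θ in 0..2 * π, Real.tanh (γ θ).re * (γ' θ).im = 2 * π * sphericalArea ζ s := by
    rw [sphericalArea, Real.circleAverage_def, smul_eq_mul, mul_inv_cancel_left₀ (by positivity)]
    simp only [γ, γ', I_mul_im, ← hr_def]
  have hdensity : ∫ θ in 0..2 * π, (1 - Real.tanh (γ θ).re ^ 2) * ‖γ' θ‖ ^ 2 =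
      2 * π * Real.circleAverage (sphericalDensity ζ) 0 r := by
    rw [Real.circleAverage_def, smul_eq_mul, mul_inv_cancel_left₀ (by positivity)]
    simp only [γ, γ', norm_mul I, norm_I, one_mul, sphericalDensity]
  rw [harea, hdensity, sub_zero] at hisop
  have hsq_pos : 0 < (2 * π) * (2 * π) := by positivity
  refine le_of_mul_le_mul_left ?_ hsq_pos
  linarith

theorem le_exp_mul_of_logistic {a a' : ℝ → ℝ} (ha : ∀ s < 0, HasDerivAt a (a' s) s)
    (ha_one : ∀ s < 0, a s ≤ 1) (ha' : ∀ s < 0, a s * (2 - a s) ≤ a' s) (hs : s < 0) :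
    a s ≤ Real.exp (2 * s) * (2 - a s) := by
  let u : ℝ → ℝ := fun t ↦ a t / (2 - a t) * Real.exp (-2 * t)
  have hpos {t : ℝ} (ht : t < 0) : 0 < 2 - a t := by linarith [ha_one t ht]
  have hu {t : ℝ} (ht : t < 0) : HasDerivAt u
      (2 * (a' t - a t * (2 - a t)) / (2 - a t) ^ 2 * Real.exp (-2 * t)) t := by
    have hexp : HasDerivAt (fun t ↦ Real.exp (-2 * t)) (Real.exp (-2 * t) * (-2)) t := by
      simpa using ((hasDerivAt_id t).const_mul (-2)).exp
    refine (((ha t ht).fun_div ((ha t ht).const_sub 2) (hpos ht).ne').fun_mul hexp).congr_deriv ?_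
    have := (hpos ht).ne'
    field_simp
    ring
  have hmono : MonotoneOn u (Iio 0) := by
    refine monotoneOn_of_hasDerivWithinAt_nonneg (convex_Iio 0)
      (fun t ht ↦ (hu ht).continuousAt.continuousWithinAt)
      (fun t ht ↦ (hu (mem_Iio.1 (interior_subset ht))).hasDerivWithinAt) fun t ht ↦ ?_
    have := sub_nonneg.2 (ha' t (mem_Iio.1 (interior_subset ht)))
    positivity
  have hu_le {t : ℝ} (ht : t < 0) : u t ≤ Real.exp (-2 * t) :=
    mul_le_of_le_one_left (Real.exp_pos _).le ((div_le_one (hpos ht)).2 (by linarith [ha_one t ht]))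
  have hlim : Tendsto (fun t ↦ Real.exp (-2 * t)) (𝓝[<] 0) (𝓝 1) := by
    have : Continuous fun t : ℝ ↦ Real.exp (-2 * t) := by fun_prop
    simpa using (this.tendsto 0).mono_left nhdsWithin_le_nhds
  have hus : u s ≤ 1 := by
    refine ge_of_tendsto hlim ?_
    filter_upwards [Ico_mem_nhdsLT hs] with t ht
    exact (hmono hs ht.2 ht.1).trans (hu_le ht.2)
  have hexp : Real.exp (-2 * s) = (Real.exp (2 * s))⁻¹ := by rw [← Real.exp_neg]; ring_nf
  have htwo_sub_pos := hpos hs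
  simp only [u] at hus
  rwa [hexp, ← div_eq_mul_inv, div_le_one (Real.exp_pos _), div_le_iff₀ htwo_sub_pos] at hus

theorem tendsto_sphericalArea_div (hζ : AnalyticOnNhd ℂ ζ (ball 0 1)) (hζ0 : (ζ 0).re = 0) :
    Tendsto (fun s ↦ sphericalArea ζ s / Real.exp (2 * s)) atBot (𝓝 (‖deriv ζ 0‖ ^ 2 / 2)) := by
  have hζc := hζ.continuousOn
  have hζ'c := hζ.deriv.continuousOn
  have hexp (s : ℝ) : HasDerivAt (fun s ↦ Real.exp (2 * s)) (2 * Real.exp s ^ 2) s := by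
    refine ((hasDerivAt_id s).const_mul 2).exp.congr_deriv ?_
    rw [← Real.exp_nat_mul, Nat.cast_ofNat, id_eq, mul_one, mul_comm]
  have harea : Tendsto (sphericalArea ζ) atBot (𝓝 0) := by
    have hF : ContinuousOn (fun z ↦ Real.tanh (ζ z).re * (z * deriv ζ z).re) (ball 0 1) := by
      fun_prop
    have hlim := tendsto_circleAverage_exp_atBot hF one_pos
    simp only [hζ0, Real.tanh_zero, zero_mul] at hlim
    exact hlim
  refine HasDerivAt.lhopital_zero_atBot_on_Iio (fun s hs ↦ hasDerivAt_sphericalArea hζ hs)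
    (fun s _ ↦ hexp s) (fun s _ ↦ by positivity) harea
    (Real.tendsto_exp_atBot.comp (tendsto_id.const_mul_atBot two_pos)) ?_
  have hF : ContinuousOn (fun z ↦ (1 - Real.tanh (ζ z).re ^ 2) * ‖deriv ζ z‖ ^ 2 / 2)
      (ball 0 1) := by
    fun_prop
  have hlim := tendsto_circleAverage_exp_atBot hF one_pos
  simp only [hζ0, Real.tanh_zero, zero_pow two_ne_zero, sub_zero, one_mul] at hlim
  refine hlim.congr fun s ↦ ?_
  rw [eq_div_iff (by positivity), mul_comm, ← smul_eq_mul, ← Real.circleAverage_fun_smul]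
  refine Real.circleAverage_congr_sphere fun z hz ↦ ?_
  rw [mem_sphere_zero_iff_norm, Real.abs_exp] at hz
  simp only [sphericalDensity, norm_mul, hz, smul_eq_mul]
  ring

theorem norm_deriv_le_two_of_sphericalArea_le_one (hζ : AnalyticOnNhd ℂ ζ (ball 0 1))
    (hζ0 : (ζ 0).re = 0) (harea : ∀ s < 0, sphericalArea ζ s ≤ 1) : ‖deriv ζ 0‖ ≤ 2 := by
  have hlim := tendsto_sphericalArea_div hζ hζ0
  have hexp : Tendsto (fun s : ℝ ↦ Real.exp (2 * s)) atBot (𝓝 0) :=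
    Real.tendsto_exp_atBot.comp (tendsto_id.const_mul_atBot two_pos)
  have hcomp : ∀ s < 0, sphericalArea ζ s / Real.exp (2 * s) * (1 + Real.exp (2 * s)) ≤ 2 := by
    intro s hs
    have hlogistic := le_exp_mul_of_logistic (fun s hs ↦ hasDerivAt_sphericalArea hζ hs) harea
      (fun s hs ↦ sphericalArea_mul_two_sub_le hζ hs) hs
    rw [div_mul_eq_mul_div, div_le_iff₀ (Real.exp_pos _)]
    linarith
  have hle : ‖deriv ζ 0‖ ^ 2 / 2 * (1 + 0) ≤ 2 :=
    le_of_tendsto (hlim.mul (hexp.const_add 1)) ((eventually_lt_atBot 0).mono hcomp)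
  nlinarith [norm_nonneg (deriv ζ 0)]

end SphericalArea

section Jensen

theorem analyticAt_multiset_prod_sub (S : Multiset ℂ) (z : ℂ) :
    AnalyticAt ℂ (fun z ↦ (S.map (z - ·)).prod) z :=
  (AnalyticOnNhd.eval_polynomial _ z (mem_univ z)).congr
    (.of_forall (eval_multiset_prod_X_sub_C S))

theorem circleAverage_log_norm_sub_mul {G : ℂ → ℂ} {r : ℝ} (hr : r ≠ 0)
    (hG : MeromorphicOn G (sphere 0 |r|))
    (hG0 : ∀ᶠ z in codiscreteWithin (sphere 0 |r|), G z ≠ 0) (a : ℂ) :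
    Real.circleAverage (fun z ↦ Real.log ‖(z - a) * G z‖) 0 r =
      Real.log r + Real.posLog (r⁻¹ * ‖0 - a‖) +
        Real.circleAverage (fun z ↦ Real.log ‖G z‖) 0 r := by
  rw [← circleAverage_log_norm_sub_const_eq_log_radius_add_posLog hr, ← Real.circleAverage_fun_add
    (circleIntegrable_log_norm_sub_const r) hG.circleIntegrable_log_norm]
  refine Real.circleAverage_congr_codiscreteWithin ?_ hr
  filter_upwards [hG0, compl_finite_mem_codiscreteWithin (finite_singleton a)] with z hGz hza
  rw [norm_mul, Real.log_mul (norm_ne_zero_iff.2 (sub_ne_zero.2 hza)) (norm_ne_zero_iff.2 hGz)]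

theorem circleAverage_log_norm_multiset_prod_mul_sub_le {h : ℂ → ℂ} {R r₁ r₂ : ℝ}
    (hh : AnalyticOnNhd ℂ h (ball 0 R)) (hh0 : ∀ z ∈ ball 0 R, h z ≠ 0) (hr₁ : 0 < r₁)
    (hr : r₁ ≤ r₂) (hr₂ : r₂ < R) (S : Multiset ℂ) :
    Real.circleAverage (fun z ↦ Real.log ‖(S.map (z - ·)).prod * h z‖) 0 r₂ -
      Real.circleAverage (fun z ↦ Real.log ‖(S.map (z - ·)).prod * h z‖) 0 r₁ ≤
        S.card * Real.log (r₂ / r₁) := by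
  have hpos : 0 < r₂ := hr₁.trans_le hr
  have hsub {r : ℝ} (h0 : 0 < r) (hR : r < R) : closedBall (0 : ℂ) |r| ⊆ ball 0 R := by
    rw [abs_of_pos h0]
    exact closedBall_subset_ball hR
  induction S using Multiset.induction_on with
  | empty =>
    have hmean {r : ℝ} (h0 : 0 < r) (hR : r < R) :
        Real.circleAverage (fun z ↦ Real.log ‖h z‖) 0 r = Real.log ‖h 0‖ :=
      (hh.mono (hsub h0 hR)).circleAverage_log_norm_of_ne_zero fun z hz ↦ hh0 z (hsub h0 hR hz)
    simp [hmean hr₁ (hr.trans_lt hr₂), hmean hpos hr₂]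
  | cons a S ih =>
    have hstep {r : ℝ} (h0 : 0 < r) (hR : r < R) := by
      have hball := sphere_subset_closedBall.trans (hsub h0 hR)
      refine circleAverage_log_norm_sub_mul (G := fun z ↦ (S.map (z - ·)).prod * h z) h0.ne' ?_ ?_ a
      · exact fun z hz ↦
          ((analyticAt_multiset_prod_sub S z).mul (hh z (hball hz))).meromorphicAt
      · filter_upwards [self_mem_codiscreteWithin _,
          compl_finite_mem_codiscreteWithin S.toFinset.finite_toSet] with z hz hzS
        refine mul_ne_zero ?_ (hh0 z (hball hz))
        simpa [Multiset.prod_eq_zero_iff, sub_eq_zero] using hzS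
    have hposLog : Real.posLog (r₂⁻¹ * ‖0 - a‖) ≤ Real.posLog (r₁⁻¹ * ‖0 - a‖) :=
      Real.posLog_le_posLog (by positivity) (by gcongr)
    simp only [Multiset.map_cons, Multiset.prod_cons, mul_assoc, Multiset.card_cons, Nat.cast_add,
      Nat.cast_one, hstep hr₁ (hr.trans_lt hr₂), hstep hpos hr₂, add_one_mul]
    rw [Real.log_div hpos.ne' hr₁.ne'] at ih ⊢
    linarith

theorem circleAverage_log_norm_sub_le_of_solCount_le {F : ℂ → ℂ} {R r₁ r₂ : ℝ} {p : ℕ}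
    (hF : AnalyticOnNhd ℂ F (ball 0 R)) (hp : solCount F (ball 0 R) ≤ p) (hr₁ : 0 < r₁)
    (hr : r₁ ≤ r₂) (hr₂ : r₂ < R) :
    Real.circleAverage (fun z ↦ Real.log ‖F z‖) 0 r₂ -
      Real.circleAverage (fun z ↦ Real.log ‖F z‖) 0 r₁ ≤ p * Real.log (r₂ / r₁) := by
  obtain ⟨n, hn, hnp⟩ := ENat.le_natCast_iff.1 hp
  obtain ⟨S, h, rfl, -, hh, hh0, hFS⟩ := exists_eq_multiset_prod_mul_of_solCount_eq hF hn
  simp only [hFS]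
  refine (circleAverage_log_norm_multiset_prod_mul_sub_le hh hh0 hr₁ hr hr₂ S).trans ?_
  have : 0 ≤ Real.log (r₂ / r₁) := Real.log_nonneg ((one_le_div hr₁).2 hr)
  gcongr

theorem integrable_prod_of_le {α β : Type*} [MeasurableSpace α] [MeasurableSpace β]
    {μ : Measure α} {ν : Measure β} [IsFiniteMeasure μ] [IsFiniteMeasure ν] {f : α × β → ℝ} {C : ℝ}
    (hf : AEStronglyMeasurable f (μ.prod ν)) (hC : ∀ x, f x ≤ C)
    (hslice : ∀ a, Integrable (fun b ↦ f (a, b)) ν)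
    (hint : Integrable (fun a ↦ ∫ b, f (a, b) ∂ν) μ) : Integrable f (μ.prod ν) := by
  suffices Integrable (fun x ↦ C - f x) (μ.prod ν) by
    simpa only [Pi.sub_def, sub_sub_cancel] using (integrable_const C).sub this
  refine (integrable_prod_iff (aestronglyMeasurable_const.sub hf)).2
    ⟨.of_forall fun a ↦ (integrable_const C).sub (hslice a), ?_⟩
  have hnorm (x : α × β) : ‖C - f x‖ = C - f x := Real.norm_of_nonneg (sub_nonneg.2 (hC x))
  simp only [Pi.sub_apply, hnorm, integral_sub (integrable_const C) (hslice _)]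
  exact (integrable_const _).sub hint

theorem circleAverage_log_norm_const_sub {w : ℂ} (hw : w ≠ 0) {ρ : ℝ} (hρ : 0 < ρ) :
    Real.circleAverage (fun u ↦ Real.log ‖w - u‖) 0 ρ = max (Real.log ‖w‖) (Real.log ρ) := by
  simp only [norm_sub_rev w]
  rw [circleAverage_log_norm_sub_const_eq_log_radius_add_posLog hρ.ne', zero_sub, norm_neg,
    Real.posLog, Real.log_mul (inv_ne_zero hρ.ne') (norm_ne_zero_iff.2 hw), Real.log_inv,
    ← max_add_add_left, add_zero, add_neg_cancel_left, max_comm]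

variable {g : ℂ → ℂ} {r ρ : ℝ}

theorem integrable_log_norm_sub_circleMap (hg : ContinuousOn g (sphere 0 |r|))
    (hg0 : ∀ z ∈ sphere 0 |r|, g z ≠ 0) (hρ : 0 < ρ) :
    Integrable (fun x : ℝ × ℝ ↦ Real.log ‖g (circleMap 0 r x.1) - circleMap 0 ρ x.2‖)
      ((volume.restrict (Ioc 0 (2 * π))).prod (volume.restrict (Ioc 0 (2 * π)))) := by
  have hmem (θ : ℝ) : circleMap 0 r θ ∈ sphere (0 : ℂ) |r| := by simp
  have hgc : Continuous fun θ ↦ g (circleMap 0 r θ) :=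
    hg.comp_continuous (continuous_circleMap 0 r) hmem
  obtain ⟨B, hB⟩ := (isCompact_sphere (0 : ℂ) |r|).exists_bound_of_continuousOn hg
  refine integrable_prod_of_le (C := B + ρ) ?_ (fun x ↦ ?_) (fun θ ↦ ?_) ?_
  · exact (Real.measurable_log.comp ((hgc.comp continuous_fst).sub
      ((continuous_circleMap 0 ρ).comp continuous_snd)).norm.measurable).aestronglyMeasurable
  · calc Real.log ‖g (circleMap 0 r x.1) - circleMap 0 ρ x.2‖
        ≤ ‖g (circleMap 0 r x.1) - circleMap 0 ρ x.2‖ := Real.log_le_self (norm_nonneg _)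
      _ ≤ ‖g (circleMap 0 r x.1)‖ + ‖circleMap 0 ρ x.2‖ := norm_sub_le _ _
      _ ≤ B + ρ := by
        rw [norm_circleMap_zero, abs_of_pos hρ]
        exact add_le_add_left (hB _ (hmem _)) ρ
  · simp only [norm_sub_rev (g _)]
    exact (circleIntegrable_log_norm_sub_const (c := 0) ρ).1
  · have hslice (θ : ℝ) :
        ∫ φ in Ioc 0 (2 * π), Real.log ‖g (circleMap 0 r θ) - circleMap 0 ρ φ‖ =
          2 * π * max (Real.log ‖g (circleMap 0 r θ)‖) (Real.log ρ) := by
      rw [← circleAverage_log_norm_const_sub (hg0 _ (hmem θ)) hρ, Real.circleAverage_def,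
        smul_eq_mul, mul_inv_cancel_left₀ Real.two_pi_pos.ne',
        intervalIntegral.integral_of_le Real.two_pi_pos.le]
    simp only [hslice]
    have hlog : Continuous fun θ ↦ Real.log ‖g (circleMap 0 r θ)‖ :=
      hgc.norm.log fun θ ↦ norm_ne_zero_iff.2 (hg0 _ (hmem θ))
    exact (Continuous.intervalIntegrable (by fun_prop) 0 (2 * π)).1

theorem circleIntegrable_circleAverage_log_norm_sub (hg : ContinuousOn g (sphere 0 |r|))
    (hg0 : ∀ z ∈ sphere 0 |r|, g z ≠ 0) (hρ : 0 < ρ) :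
    CircleIntegrable (fun u ↦ Real.circleAverage (fun z ↦ Real.log ‖g z - u‖) 0 r) 0 ρ := by
  have hint := (integrable_log_norm_sub_circleMap hg hg0 hρ).integral_prod_right
  simp only [← intervalIntegral.integral_of_le Real.two_pi_pos.le] at hint
  exact (intervalIntegrable_iff_integrableOn_Ioc_of_le Real.two_pi_pos.le).2
    (hint.smul (2 * π)⁻¹)

theorem circleAverage_circleAverage_log_norm_sub (hg : ContinuousOn g (sphere 0 |r|))
    (hg0 : ∀ z ∈ sphere 0 |r|, g z ≠ 0) (hρ : 0 < ρ) :
    Real.circleAverage (fun u ↦ Real.circleAverage (fun z ↦ Real.log ‖g z - u‖) 0 r) 0 ρ =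
      Real.circleAverage (fun z ↦ max (Real.log ‖g z‖) (Real.log ρ)) 0 r := by
  have hint := integrable_log_norm_sub_circleMap hg hg0 hρ
  rw [Measure.prod_restrict, ← Measure.volume_eq_prod, ← uIoc_of_le Real.two_pi_pos.le] at hint
  have hswap := intervalIntegral_intervalIntegral_swap
    (F := fun θ φ ↦ Real.log ‖g (circleMap 0 r θ) - circleMap 0 ρ φ‖) hint
  rw [Real.circleAverage_congr_sphere (f₁ := fun z ↦ max (Real.log ‖g z‖) (Real.log ρ))
    fun z hz ↦ (circleAverage_log_norm_const_sub (hg0 z hz) hρ).symm]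
  simp only [Real.circleAverage_def, intervalIntegral.integral_smul, hswap]

theorem IsPValentOn.circleAverage_max_log_norm_sub_le {R r₁ r₂ : ℝ} {p : ℕ}
    (hp : IsPValentOn g (ball 0 R) p) (hg : AnalyticOnNhd ℂ g (ball 0 R))
    (hg0 : ∀ z ∈ ball 0 R, g z ≠ 0) (hr₁ : 0 < r₁) (hr : r₁ ≤ r₂) (hr₂ : r₂ < R) (hρ : 0 < ρ) :
    Real.circleAverage (fun z ↦ max (Real.log ‖g z‖) (Real.log ρ)) 0 r₂ -
      Real.circleAverage (fun z ↦ max (Real.log ‖g z‖) (Real.log ρ)) 0 r₁ ≤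
        p * Real.log (r₂ / r₁) := by
  have hsub {r : ℝ} (h0 : 0 < r) (hR : r < R) : sphere (0 : ℂ) |r| ⊆ ball 0 R :=
    sphere_subset_ball (by rwa [abs_of_pos h0])
  have hsub₁ := hsub hr₁ (hr.trans_lt hr₂)
  have hsub₂ := hsub (hr₁.trans_le hr) hr₂
  have hint₁ := circleIntegrable_circleAverage_log_norm_sub (hg.continuousOn.mono hsub₁)
    (fun z hz ↦ hg0 z (hsub₁ hz)) hρ
  have hint₂ := circleIntegrable_circleAverage_log_norm_sub (hg.continuousOn.mono hsub₂)
    (fun z hz ↦ hg0 z (hsub₂ hz)) hρ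
  rw [← circleAverage_circleAverage_log_norm_sub (hg.continuousOn.mono hsub₁)
    (fun z hz ↦ hg0 z (hsub₁ hz)) hρ, ← circleAverage_circleAverage_log_norm_sub
    (hg.continuousOn.mono hsub₂) (fun z hz ↦ hg0 z (hsub₂ hz)) hρ,
    ← Real.circleAverage_fun_sub hint₂ hint₁]
  refine Real.circleAverage_mono_on_of_le_circle (hint₂.sub hint₁) fun c _ ↦ ?_
  exact circleAverage_log_norm_sub_le_of_solCount_le (hg.sub analyticOnNhd_const) (hp c) hr₁ hr hr₂

end Jensen

section AreaBound

theorem integral_one_sub_tanh_sq_mul_max {x T : ℝ} (hx : x ∈ Icc (-T) T) :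
    ∫ t in -T..T, (1 - Real.tanh t ^ 2) * max x t =
      Real.log (Real.cosh x) + (x * Real.tanh T + (T * Real.tanh T - Real.log (Real.cosh T))) := by
  have hcont : Continuous fun t ↦ (1 - Real.tanh t ^ 2) * max x t := by fun_prop
  have hlower : ∫ t in -T..x, (1 - Real.tanh t ^ 2) * max x t =
      Real.tanh x * x - Real.tanh (-T) * x := by
    rw [← intervalIntegral.integral_eq_sub_of_hasDerivAt
      (fun t _ ↦ (hasDerivAt_tanh t).mul_const x) (Continuous.intervalIntegrable (by fun_prop) _ _)]
    refine intervalIntegral.integral_congr fun t ht ↦ ?_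
    rw [uIcc_of_le hx.1] at ht
    simp only [max_eq_left ht.2]
  have hupper : ∫ t in x..T, (1 - Real.tanh t ^ 2) * max x t =
      (Real.tanh T * T - Real.log (Real.cosh T)) - (Real.tanh x * x - Real.log (Real.cosh x)) := by
    have hprim (t : ℝ) : HasDerivAt (fun t ↦ Real.tanh t * t - Real.log (Real.cosh t))
        ((1 - Real.tanh t ^ 2) * t) t :=
      (((hasDerivAt_tanh t).fun_mul (hasDerivAt_id t)).fun_sub
        (hasDerivAt_log_cosh t)).congr_deriv (by simp)
    rw [← intervalIntegral.integral_eq_sub_of_hasDerivAt (fun t _ ↦ hprim t)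
      (Continuous.intervalIntegrable (by fun_prop) _ _)]
    refine intervalIntegral.integral_congr fun t ht ↦ ?_
    rw [uIcc_of_le hx.2] at ht
    simp only [max_eq_right ht.1]
  rw [← intervalIntegral.integral_add_adjacent_intervals (hcont.intervalIntegrable (-T) x)
    (hcont.intervalIntegrable x T), hlower, hupper, Real.tanh_neg]
  ring

theorem continuous_circleAverage_max {v : ℂ → ℝ} {r : ℝ} (hv : ContinuousOn v (sphere 0 |r|)) :
    Continuous fun t ↦ Real.circleAverage (fun z ↦ max (v z) t) 0 r := by
  have hvc : Continuous fun θ ↦ v (circleMap 0 r θ) :=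
    hv.comp_continuous (continuous_circleMap 0 r) (by simp)
  refine (intervalIntegral.continuous_parametric_intervalIntegral_of_continuous'
    (f := fun t θ ↦ max (v (circleMap 0 r θ)) t) ?_ 0 (2 * π)).const_smul (2 * π)⁻¹
  exact (hvc.comp continuous_snd).max continuous_fst

theorem circleAverage_const_mul (a : ℝ) (v : ℂ → ℝ) (c : ℂ) (r : ℝ) :
    Real.circleAverage (fun z ↦ a * v z) c r = a * Real.circleAverage v c r :=
  Real.circleAverage_fun_smul (𝕜 := ℝ) (f := v)

theorem integral_circleAverage_swap {k : ℝ → ℂ → ℝ} {c : ℂ} {r a b : ℝ}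
    (hk : Continuous fun x : ℝ × ℝ ↦ k x.1 (circleMap c r x.2)) :
    ∫ t in a..b, Real.circleAverage (k t) c r =
      Real.circleAverage (fun z ↦ ∫ t in a..b, k t z) c r := by
  simp only [Real.circleAverage_def, intervalIntegral.integral_smul]
  rw [intervalIntegral_intervalIntegral_swap (F := fun t θ ↦ k t (circleMap c r θ))
    ((hk.continuousOn.integrableOn_compact (isCompact_uIcc.prod isCompact_uIcc)).mono_set
      (prod_mono uIoc_subset_uIcc uIoc_subset_uIcc))]

theorem integral_one_sub_tanh_sq_mul_circleAverage_max {v : ℂ → ℝ} {r T : ℝ}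
    (hv : ContinuousOn v (sphere 0 |r|)) (hT : ∀ z ∈ sphere 0 |r|, |v z| ≤ T) :
    ∫ t in -T..T, (1 - Real.tanh t ^ 2) * Real.circleAverage (fun z ↦ max (v z) t) 0 r =
      Real.circleAverage (fun z ↦ Real.log (Real.cosh (v z))) 0 r +
        (Real.circleAverage v 0 r * Real.tanh T + (T * Real.tanh T - Real.log (Real.cosh T))) := by
  have hvc : Continuous fun x : ℝ × ℝ ↦ v (circleMap 0 r x.2) :=
    (hv.comp_continuous (continuous_circleMap 0 r) (by simp)).comp continuous_snd
  have hweight : Continuous fun x : ℝ × ℝ ↦ 1 - Real.tanh x.1 ^ 2 := by fun_prop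
  have hlog : CircleIntegrable (fun z ↦ Real.log (Real.cosh (v z))) 0 r :=
    (contDiff_log_cosh (n := 0)).continuous.comp_continuousOn hv |>.circleIntegrable'
  have htanh : CircleIntegrable (fun z ↦ v z * Real.tanh T) 0 r :=
    (hv.mul_const _).circleIntegrable'
  have haffine : CircleIntegrable
      (fun z ↦ v z * Real.tanh T + (T * Real.tanh T - Real.log (Real.cosh T))) 0 r :=
    htanh.add (circleIntegrable_const _ 0 r)
  simp only [← circleAverage_const_mul]
  rw [integral_circleAverage_swap (k := fun t z ↦ (1 - Real.tanh t ^ 2) * max (v z) t)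
    (hweight.mul (hvc.max continuous_fst)), Real.circleAverage_congr_sphere fun z hz ↦
      integral_one_sub_tanh_sq_mul_max (abs_le.1 (hT z hz))]
  rw [Real.circleAverage_fun_add hlog haffine,
    Real.circleAverage_fun_add htanh (circleIntegrable_const _ 0 r), Real.circleAverage_const]
  simp only [mul_comm _ (Real.tanh T), circleAverage_const_mul]

theorem circleAverage_log_cosh_sub_le {v : ℂ → ℝ} {r₁ r₂ B : ℝ}
    (hv₁ : ContinuousOn v (sphere 0 |r₁|)) (hv₂ : ContinuousOn v (sphere 0 |r₂|))
    (hmean : Real.circleAverage v 0 r₁ = Real.circleAverage v 0 r₂) (hB : 0 ≤ B)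
    (hmax : ∀ t, Real.circleAverage (fun z ↦ max (v z) t) 0 r₂ -
      Real.circleAverage (fun z ↦ max (v z) t) 0 r₁ ≤ B) :
    Real.circleAverage (fun z ↦ Real.log (Real.cosh (v z))) 0 r₂ -
      Real.circleAverage (fun z ↦ Real.log (Real.cosh (v z))) 0 r₁ ≤ 2 * B := by
  obtain ⟨T₁, hT₁⟩ := (isCompact_sphere (0 : ℂ) |r₁|).exists_bound_of_continuousOn hv₁
  obtain ⟨T₂, hT₂⟩ := (isCompact_sphere (0 : ℂ) |r₂|).exists_bound_of_continuousOn hv₂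
  let T := max T₁ T₂
  have hT : 0 ≤ T :=
    (norm_nonneg _).trans ((hT₁ _ (circleMap_mem_sphere' 0 r₁ 0)).trans (le_max_left _ _))
  have hformula₁ := integral_one_sub_tanh_sq_mul_circleAverage_max hv₁
    fun z hz ↦ (hT₁ z hz).trans (le_max_left T₁ T₂)
  have hformula₂ := integral_one_sub_tanh_sq_mul_circleAverage_max hv₂
    fun z hz ↦ (hT₂ z hz).trans (le_max_right T₁ T₂)
  have hcont₁ := continuous_circleAverage_max hv₁
  have hcont₂ := continuous_circleAverage_max hv₂
  have hle : ∫ t in -T..T, (1 - Real.tanh t ^ 2) *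
        (Real.circleAverage (fun z ↦ max (v z) t) 0 r₂ -
          Real.circleAverage (fun z ↦ max (v z) t) 0 r₁) ≤
      ∫ t in -T..T, (1 - Real.tanh t ^ 2) * B := by
    refine intervalIntegral.integral_mono_on (by linarith)
      (Continuous.intervalIntegrable (by fun_prop) _ _)
      (Continuous.intervalIntegrable (by fun_prop) _ _) fun t _ ↦ ?_
    exact mul_le_mul_of_nonneg_left (hmax t) (one_sub_tanh_sq_pos t).le
  have htotal : ∫ t in -T..T, (1 - Real.tanh t ^ 2) * B = 2 * Real.tanh T * B := by
    rw [intervalIntegral.integral_mul_const, intervalIntegral.integral_eq_sub_of_hasDerivAt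
      (fun t _ ↦ hasDerivAt_tanh t) (Continuous.intervalIntegrable (by fun_prop) _ _),
      Real.tanh_neg]
    ring
  simp only [mul_sub] at hle
  rw [intervalIntegral.integral_sub (Continuous.intervalIntegrable (by fun_prop) _ _)
    (Continuous.intervalIntegrable (by fun_prop) _ _), hformula₁, hformula₂, hmean, htotal] at hle
  have := mul_le_mul_of_nonneg_right (Real.tanh_lt_one T).le hB
  linarith

variable {ζ : ℂ → ℂ} {a : ℂ} {p : ℕ}

theorem circleAverage_re_eq (hζ : AnalyticOnNhd ℂ ζ (ball 0 1)) {r : ℝ} (hr : |r| < 1) :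
    Real.circleAverage (fun z ↦ (ζ z).re) 0 r = (ζ 0).re :=
  InnerProductSpace.HarmonicOnNhd.circleAverage_eq fun z hz ↦
    (hζ z (closedBall_subset_ball hr hz)).harmonicAt_re

theorem circleAverage_max_re_sub_le (hζ : AnalyticOnNhd ℂ ζ (ball 0 1)) (ha : a ≠ 0)
    (hp : IsPValentOn (fun z ↦ a * exp (2 * p * ζ z)) (ball 0 1) p) {r₁ r₂ : ℝ} (hr₁ : 0 < r₁)
    (hr : r₁ ≤ r₂) (hr₂ : r₂ < 1) (t : ℝ) :
    Real.circleAverage (fun z ↦ max (ζ z).re t) 0 r₂ -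
      Real.circleAverage (fun z ↦ max (ζ z).re t) 0 r₁ ≤ Real.log (r₂ / r₁) / 2 := by
  have hg : AnalyticOnNhd ℂ (fun z ↦ a * exp (2 * p * ζ z)) (ball 0 1) :=
    analyticOnNhd_const.mul (analyticOnNhd_const.mul hζ).cexp
  have hp0 : (0 : ℝ) < p := by exact_mod_cast hp.pos hg (nonempty_ball.2 one_pos)
  have hgrowth := hp.circleAverage_max_log_norm_sub_le hg
    (fun z _ ↦ mul_ne_zero ha (exp_ne_zero _)) hr₁ hr hr₂
    (ρ := ‖a‖ * Real.exp (2 * p * t)) (by positivity)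
  have hlog (z : ℂ) : max (Real.log ‖a * exp (2 * p * ζ z)‖)
      (Real.log (‖a‖ * Real.exp (2 * p * t))) = Real.log ‖a‖ + 2 * p * max (ζ z).re t := by
    have hre : (2 * p * ζ z).re = 2 * p * (ζ z).re := by simp
    rw [norm_mul, norm_exp, hre, Real.log_mul (norm_ne_zero_iff.2 ha) (Real.exp_pos _).ne',
      Real.log_mul (norm_ne_zero_iff.2 ha) (Real.exp_pos _).ne', Real.log_exp, Real.log_exp,
      max_add_add_left, mul_max_of_nonneg _ _ (by positivity)]
  have havg {r : ℝ} (h0 : 0 < r) (h1 : r < 1) :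
      Real.circleAverage (fun z ↦ Real.log ‖a‖ + 2 * p * max (ζ z).re t) 0 r =
        Real.log ‖a‖ + 2 * p * Real.circleAverage (fun z ↦ max (ζ z).re t) 0 r := by
    have hmax : ContinuousOn (fun z ↦ 2 * p * max (ζ z).re t) (ball 0 1) := by
      have := hζ.continuousOn
      fun_prop
    rw [Real.circleAverage_fun_add (circleIntegrable_const _ 0 r)
      (circleIntegrable_of_continuousOn_ball hmax (by rwa [abs_of_pos h0])),
      Real.circleAverage_const]
    rw [circleAverage_const_mul]
  simp only [hlog, havg hr₁ (hr.trans_lt hr₂), havg (hr₁.trans_le hr) hr₂] at hgrowth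
  refine le_of_mul_le_mul_left ?_ (mul_pos two_pos hp0)
  linarith

theorem sphericalArea_le_one_of_isPValentOn (hζ : AnalyticOnNhd ℂ ζ (ball 0 1)) (ha : a ≠ 0)
    (hp : IsPValentOn (fun z ↦ a * exp (2 * p * ζ z)) (ball 0 1) p) {s : ℝ} (hs : s < 0) :
    sphericalArea ζ s ≤ 1 := by
  have hre := continuous_re.comp_continuousOn hζ.continuousOn
  let m : ℝ → ℝ := fun s ↦
    Real.circleAverage (fun z ↦ Real.log (Real.cosh (ζ z).re)) 0 (Real.exp s)
  have hanti : AntitoneOn (fun s ↦ m s - s) (Iio 0) := by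
    intro s₁ hs₁ s₂ hs₂ hs
    have hlog : Real.log (Real.exp s₂ / Real.exp s₁) = s₂ - s₁ := by
      rw [← Real.exp_sub, Real.log_exp]
    have hgrowth := circleAverage_log_cosh_sub_le (v := fun z ↦ (ζ z).re)
      (hre.mono (sphere_subset_ball (abs_exp_lt_one hs₁)))
      (hre.mono (sphere_subset_ball (abs_exp_lt_one hs₂)))
      ((circleAverage_re_eq hζ (abs_exp_lt_one hs₁)).trans
        (circleAverage_re_eq hζ (abs_exp_lt_one hs₂)).symm)
      (B := (s₂ - s₁) / 2) (by linarith) fun t ↦ by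
        rw [← hlog]
        exact circleAverage_max_re_sub_le hζ ha hp (Real.exp_pos s₁) (Real.exp_le_exp.2 hs)
          (Real.exp_lt_one_iff.2 hs₂) t
    simp only [m]
    linarith
  have hderiv : HasDerivAt (fun s ↦ m s - s) (sphericalArea ζ s - 1) s :=
    (hasDerivAt_circleAverage_log_cosh hζ hs).sub (hasDerivAt_id s)
  have hnonpos := hanti.derivWithin_nonpos (x := s)
  rw [hderiv.hasDerivWithinAt.derivWithin (isOpen_Iio.uniqueDiffWithinAt hs)] at hnonpos
  linarith

end AreaBound

section Distortion

theorem exists_eq_mul_exp {g : ℂ → ℂ} {c : ℂ} {r : ℝ} (hr : 0 < r)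
    (hg : AnalyticOnNhd ℂ g (ball c r)) (hg0 : ∀ z ∈ ball c r, g z ≠ 0) :
    ∃ L : ℂ → ℂ, L c = 0 ∧ (∀ z ∈ ball c r, HasDerivAt L (deriv g z / g z) z) ∧
      ∀ z ∈ ball c r, g z = g c * exp (L z) := by
  obtain ⟨L, hLc, hL⟩ := (hg.deriv.div hg hg0).differentiableOn.isExactOn_ball.with_val_at c 0
  refine ⟨L, hLc, hL, fun z hz ↦ ?_⟩
  have hquot (w : ℂ) (hw : w ∈ ball c r) : HasDerivAt (fun w ↦ g w * exp (-L w)) 0 w := by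
    refine ((hg w hw).differentiableAt.hasDerivAt.mul (hL w hw).neg.cexp).congr_deriv ?_
    have := hg0 w hw
    field_simp
    ring
  have hconst : g z * exp (-L z) = g c * exp (-L c) :=
    isOpen_ball.is_const_of_deriv_eq_zero (convex_ball c r).isPreconnected
      (fun w hw ↦ (hquot w hw).differentiableAt.differentiableWithinAt)
      (fun w hw ↦ (hquot w hw).deriv) hz (mem_ball_self hr)
  rw [hLc, neg_zero, exp_zero, mul_one] at hconst
  rw [← hconst, mul_assoc, ← exp_add, neg_add_cancel, exp_zero, mul_one]

variable {g : ℂ → ℂ} {p : ℕ}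

theorem norm_logDeriv_zero_le (hg : AnalyticOnNhd ℂ g (ball 0 1))
    (hg0 : ∀ z ∈ ball 0 1, g z ≠ 0) (hp : IsPValentOn g (ball 0 1) p) :
    ‖logDeriv g 0‖ ≤ 4 * p := by
  have hmem : (0 : ℂ) ∈ ball 0 1 := mem_ball_self one_pos
  have hppos : (0 : ℝ) < p := by exact_mod_cast hp.pos hg ⟨0, hmem⟩
  have hpne : (p : ℂ) ≠ 0 := by exact_mod_cast hppos.ne'
  obtain ⟨L, hL0, hL, hgL⟩ := exists_eq_mul_exp one_pos hg hg0
  let ζ : ℂ → ℂ := fun z ↦ L z / (2 * p)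
  have hζ : AnalyticOnNhd ℂ ζ (ball 0 1) :=
    DifferentiableOn.analyticOnNhd (fun z hz ↦
      ((hL z hz).div_const _).differentiableAt.differentiableWithinAt) isOpen_ball
  have hexp : EqOn g (fun z ↦ g 0 * exp (2 * p * ζ z)) (ball 0 1) := fun z hz ↦ by
    simp only [ζ, mul_div_cancel₀ (L z) (mul_ne_zero two_ne_zero hpne), hgL z hz]
  have hderiv : ‖deriv ζ 0‖ ≤ 2 :=
    norm_deriv_le_two_of_sphericalArea_le_one hζ (by simp [ζ, hL0]) fun s hs ↦
      sphericalArea_le_one_of_isPValentOn hζ (hg0 0 hmem) (hp.congr isOpen_ball hexp) hs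
  rw [((hL 0 hmem).div_const _).deriv, norm_div,
    div_le_iff₀ (norm_pos_iff.2 (mul_ne_zero two_ne_zero hpne))] at hderiv
  calc ‖logDeriv g 0‖ ≤ 2 * ‖(2 * p : ℂ)‖ := hderiv
    _ = 4 * p := by
      rw [norm_mul, norm_ofNat, norm_natCast]
      ring

theorem one_add_conj_mul_ne_zero {a z : ℂ} (ha : ‖a‖ < 1) (hz : ‖z‖ < 1) :
    1 + conj a * z ≠ 0 := by
  intro h
  have : ‖a‖ * ‖z‖ = 1 := by
    simpa using congrArg norm (eq_neg_of_add_eq_zero_right h)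
  exact (mul_lt_one_of_nonneg_of_lt_one_left (norm_nonneg a) ha hz.le).ne this

theorem norm_add_div_one_add_conj_mul_lt_one {a z : ℂ} (ha : ‖a‖ < 1) (hz : ‖z‖ < 1) :
    ‖(z + a) / (1 + conj a * z)‖ < 1 := by
  rw [norm_div, div_lt_one (norm_pos_iff.2 (one_add_conj_mul_ne_zero ha hz))]
  have hid : ‖1 + conj a * z‖ ^ 2 - ‖z + a‖ ^ 2 = (1 - ‖a‖ ^ 2) * (1 - ‖z‖ ^ 2) := by
    simp only [← normSq_eq_norm_sq, normSq_apply, add_re, one_re, mul_re, conj_re, conj_im,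
      neg_mul, sub_neg_eq_add, add_im, one_im, mul_im, zero_add]
    ring
  have hpos : 0 < (1 - ‖a‖ ^ 2) * (1 - ‖z‖ ^ 2) :=
    mul_pos (sub_pos.2 (pow_lt_one₀ (norm_nonneg a) ha two_ne_zero))
      (sub_pos.2 (pow_lt_one₀ (norm_nonneg z) hz two_ne_zero))
  exact lt_of_pow_lt_pow_left₀ 2 (norm_nonneg _) (by linarith)

theorem hasDerivAt_add_div_one_add_conj_mul {a z : ℂ} (h : 1 + conj a * z ≠ 0) :
    HasDerivAt (fun z ↦ (z + a) / (1 + conj a * z)) ((1 - ‖a‖ ^ 2) / (1 + conj a * z) ^ 2) z := by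
  have hnum : HasDerivAt (fun z ↦ z + a) 1 z := (hasDerivAt_id z).add_const a
  have hden : HasDerivAt (fun z ↦ 1 + conj a * z) (conj a) z := by
    simpa using ((hasDerivAt_id z).const_mul (conj a)).const_add 1
  refine (hnum.div hden h).congr_deriv ?_
  rw [← mul_conj']
  ring

theorem injOn_add_div_one_add_conj_mul {a : ℂ} (ha : ‖a‖ < 1) :
    InjOn (fun z ↦ (z + a) / (1 + conj a * z)) (ball 0 1) := by
  intro z hz w hw hzw
  rw [mem_ball_zero_iff] at hz hw
  simp only at hzw
  rw [div_eq_div_iff (one_add_conj_mul_ne_zero ha hz) (one_add_conj_mul_ne_zero ha hw)] at hzw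
  have hmul : (z - w) * (1 + conj a * -a) = 0 := by linear_combination hzw
  refine sub_eq_zero.1 ((mul_eq_zero.1 hmul).resolve_right ?_)
  exact one_add_conj_mul_ne_zero ha (by rwa [norm_neg])

theorem norm_logDeriv_le (hg : AnalyticOnNhd ℂ g (ball 0 1)) (hg0 : ∀ z ∈ ball 0 1, g z ≠ 0)
    (hp : IsPValentOn g (ball 0 1) p) {a : ℂ} (ha : a ∈ ball 0 1) :
    ‖logDeriv g a‖ ≤ 4 * p / (1 - ‖a‖ ^ 2) := by
  have ha1 : ‖a‖ < 1 := mem_ball_zero_iff.1 ha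
  have hpos : 0 < 1 - ‖a‖ ^ 2 := sub_pos.2 (pow_lt_one₀ (norm_nonneg a) ha1 two_ne_zero)
  have hnorm : ‖(1 - ‖a‖ ^ 2 : ℂ)‖ = 1 - ‖a‖ ^ 2 := by
    rw [← ofReal_pow, ← ofReal_one, ← ofReal_sub, norm_real, Real.norm_of_nonneg hpos.le]
  let φ : ℂ → ℂ := fun z ↦ (z + a) / (1 + conj a * z)
  have hden (z : ℂ) (hz : z ∈ ball 0 1) : 1 + conj a * z ≠ 0 :=
    one_add_conj_mul_ne_zero ha1 (mem_ball_zero_iff.1 hz)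
  have hφ (z : ℂ) (hz : z ∈ ball 0 1) : HasDerivAt φ ((1 - ‖a‖ ^ 2) / (1 + conj a * z) ^ 2) z :=
    hasDerivAt_add_div_one_add_conj_mul (hden z hz)
  have hφ' (z : ℂ) (hz : z ∈ ball 0 1) : deriv φ z ≠ 0 := by
    rw [(hφ z hz).deriv]
    exact div_ne_zero (norm_pos_iff.1 (hnorm ▸ hpos)) (pow_ne_zero 2 (hden z hz))
  have hφa : AnalyticOnNhd ℂ φ (ball 0 1) :=
    DifferentiableOn.analyticOnNhd (fun z hz ↦ (hφ z hz).differentiableAt.differentiableWithinAt)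
      isOpen_ball
  have hmaps : MapsTo φ (ball 0 1) (ball 0 1) := fun z hz ↦
    mem_ball_zero_iff.2 (norm_add_div_one_add_conj_mul_lt_one ha1 (mem_ball_zero_iff.1 hz))
  have hmem : (0 : ℂ) ∈ ball 0 1 := mem_ball_self one_pos
  have hφ0 : φ 0 = a := by simp [φ]
  have hzero := norm_logDeriv_zero_le (hg.comp hφa hmaps) (fun z hz ↦ hg0 _ (hmaps hz))
    (hp.comp hφa hφ' hmaps (injOn_add_div_one_add_conj_mul ha1))
  rw [logDeriv_comp (hg _ (hmaps hmem)).differentiableAt (hφ 0 hmem).differentiableAt,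
    (hφ 0 hmem).deriv, hφ0, norm_mul, mul_zero, add_zero, one_pow, div_one, hnorm] at hzero
  rwa [le_div_iff₀ hpos]

theorem hasDerivAt_log_one_add_sub_log_one_sub {x : ℝ} (hx : |x| < 1) :
    HasDerivAt (fun x ↦ Real.log (1 + x) - Real.log (1 - x)) (2 / (1 - x ^ 2)) x := by
  obtain ⟨hlower, hupper⟩ := abs_lt.1 hx
  have hplus : 1 + x ≠ 0 := by linarith
  have hminus : 1 - x ≠ 0 := by linarith
  refine ((((hasDerivAt_id x).const_add 1).log hplus).sub
    (((hasDerivAt_id x).const_sub 1).log hminus)).congr_deriv ?_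
  rw [show 1 - x ^ 2 = (1 + x) * (1 - x) by ring]
  simp only [id]
  field_simp
  ring

theorem norm_sub_le_mul_log_of_norm_deriv_le {L L' : ℂ → ℂ} {C : ℝ}
    (hL : ∀ z ∈ ball 0 1, HasDerivAt L (L' z) z)
    (hbound : ∀ z ∈ ball 0 1, ‖L' z‖ ≤ 2 * C / (1 - ‖z‖ ^ 2)) {z : ℂ} (hz : z ∈ ball 0 1) :
    ‖L z - L 0‖ ≤ C * Real.log ((1 + ‖z‖) / (1 - ‖z‖)) := by
  have hz1 : ‖z‖ < 1 := mem_ball_zero_iff.1 hz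
  have hnorm {t : ℝ} (ht : t ∈ Icc (0 : ℝ) 1) : ‖t * z‖ = t * ‖z‖ := by
    rw [norm_mul, norm_real, Real.norm_of_nonneg ht.1]
  have hlt {t : ℝ} (ht : t ∈ Icc (0 : ℝ) 1) : t * ‖z‖ < 1 :=
    (mul_le_of_le_one_left (norm_nonneg z) ht.2).trans_lt hz1
  have hmem {t : ℝ} (ht : t ∈ Icc (0 : ℝ) 1) : t * z ∈ ball 0 1 :=
    mem_ball_zero_iff.2 ((hnorm ht).trans_lt (hlt ht))
  have hradial {t : ℝ} (ht : t ∈ Icc (0 : ℝ) 1) :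
      HasDerivAt (fun t : ℝ ↦ L (t * z) - L 0) (L' (t * z) * z) t := by
    have hline : HasDerivAt (fun t : ℝ ↦ (t : ℂ) * z) z t := by
      simpa using (ofRealCLM.hasDerivAt (x := t)).mul_const z
    exact ((hL _ (hmem ht)).comp t hline).sub_const _
  have hlog {t : ℝ} (ht : t ∈ Icc (0 : ℝ) 1) :
      HasDerivAt (fun t ↦ C * (Real.log (1 + t * ‖z‖) - Real.log (1 - t * ‖z‖)))
        (2 * C / (1 - (t * ‖z‖) ^ 2) * ‖z‖) t := by
    have habs : |t * ‖z‖| < 1 :=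
      (abs_of_nonneg (mul_nonneg ht.1 (norm_nonneg z))).trans_lt (hlt ht)
    refine (((hasDerivAt_log_one_add_sub_log_one_sub habs).comp t
      (hasDerivAt_mul_const ‖z‖)).const_mul C).congr_deriv ?_
    ring
  have := image_norm_le_of_norm_deriv_right_le_deriv_boundary'
    (fun t ht ↦ (hradial ht).continuousAt.continuousWithinAt)
    (fun t ht ↦ (hradial (Ico_subset_Icc_self ht)).hasDerivWithinAt) (by simp)
    (fun t ht ↦ (hlog ht).continuousAt.continuousWithinAt)
    (fun t ht ↦ (hlog (Ico_subset_Icc_self ht)).hasDerivWithinAt)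
    (fun t ht ↦ by
      rw [norm_mul, ← hnorm (Ico_subset_Icc_self ht)]
      exact mul_le_mul_of_nonneg_right (hbound _ (hmem (Ico_subset_Icc_self ht))) (norm_nonneg z))
    (right_mem_Icc.2 zero_le_one)
  rw [Real.log_div (by positivity) (sub_pos.2 hz1).ne']
  simpa using this

theorem abs_log_norm_sub_le (hg : AnalyticOnNhd ℂ g (ball 0 1))
    (hg0 : ∀ z ∈ ball 0 1, g z ≠ 0) (hp : IsPValentOn g (ball 0 1) p) {z : ℂ}
    (hz : z ∈ ball 0 1) :
    |Real.log ‖g z‖ - Real.log ‖g 0‖| ≤ 2 * p * Real.log ((1 + ‖z‖) / (1 - ‖z‖)) := by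
  obtain ⟨L, hL0, hL, hgL⟩ := exists_eq_mul_exp one_pos hg hg0
  have hlog : Real.log ‖g z‖ - Real.log ‖g 0‖ = (L z - L 0).re := by
    rw [hgL z hz, norm_mul, norm_exp, Real.log_mul
      (norm_ne_zero_iff.2 (hg0 0 (mem_ball_self one_pos))) (Real.exp_pos _).ne', Real.log_exp,
      hL0, sub_zero, add_sub_cancel_left]
  rw [hlog]
  refine (abs_re_le_norm _).trans (norm_sub_le_mul_log_of_norm_deriv_le hL (fun w hw ↦ ?_) hz)
  exact (norm_logDeriv_le hg hg0 hp hw).trans_eq (by ring)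

theorem norm_le_pow_mul_norm (hg : AnalyticOnNhd ℂ g (ball 0 1))
    (hg0 : ∀ z ∈ ball 0 1, g z ≠ 0) (hp : IsPValentOn g (ball 0 1) p) {z w : ℂ} {R ρ : ℝ}
    (hz : ‖z‖ ≤ R) (hR : R < 1) (hw : ‖w‖ ≤ ρ) (hρ : ρ < 1) :
    ‖g z‖ ≤ ((1 + R) / (1 - R) * ((1 + ρ) / (1 - ρ))) ^ (2 * p) * ‖g w‖ := by
  have hR0 : 0 ≤ R := (norm_nonneg z).trans hz
  have hρ0 : 0 ≤ ρ := (norm_nonneg w).trans hw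
  have hmono {x y : ℝ} (hx : 0 ≤ x) (hxy : x ≤ y) (hy : y < 1) :
      Real.log ((1 + x) / (1 - x)) ≤ Real.log ((1 + y) / (1 - y)) := by
    have : 0 < 1 - y := sub_pos.2 hy
    have : 0 < 1 - x := by linarith
    have : 0 ≤ 1 + y := by linarith
    gcongr
  have hzb : z ∈ ball 0 1 := mem_ball_zero_iff.2 (hz.trans_lt hR)
  have hwb : w ∈ ball 0 1 := mem_ball_zero_iff.2 (hw.trans_lt hρ)
  have hRpos : 0 < (1 + R) / (1 - R) := div_pos (by linarith) (sub_pos.2 hR)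
  have hρpos : 0 < (1 + ρ) / (1 - ρ) := div_pos (by linarith) (sub_pos.2 hρ)
  have hz_le := (abs_le.1 (abs_log_norm_sub_le hg hg0 hp hzb)).2.trans
    (mul_le_mul_of_nonneg_left (hmono (norm_nonneg z) hz hR) (by positivity))
  have hw_le := (neg_le.1 (abs_le.1 (abs_log_norm_sub_le hg hg0 hp hwb)).1).trans
    (mul_le_mul_of_nonneg_left (hmono (norm_nonneg w) hw hρ) (by positivity))
  have hgw : 0 < ‖g w‖ := norm_pos_iff.2 (hg0 w hwb)
  rw [← Real.log_le_log_iff (norm_pos_iff.2 (hg0 z hzb)) (by positivity),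
    Real.log_mul (by positivity) hgw.ne', Real.log_pow, Real.log_mul hRpos.ne' hρpos.ne']
  push_cast
  linarith

end Distortion

section Remez

theorem norm_multiset_prod_sub (S : Multiset ℂ) (z : ℂ) :
    ‖(S.map (z - ·)).prod‖ = (S.map (dist z)).prod := by
  have := map_multiset_prod (normHom : ℂ →*₀ ℝ) (S.map (z - ·))
  rw [Multiset.map_map] at this
  simp only [dist_eq_norm]
  exact this

theorem norm_multiset_prod_sub_le {S : Multiset ℂ} {z : ℂ} {d : ℝ}
    (hd : ∀ x ∈ S, dist z x ≤ d) : ‖(S.map (z - ·)).prod‖ ≤ d ^ S.card := by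
  rw [norm_multiset_prod_sub]
  refine (Multiset.prod_map_le_prod_map₀ _ (fun _ ↦ d) (fun _ _ ↦ dist_nonneg) hd).trans_eq ?_
  rw [Multiset.map_const', Multiset.prod_replicate]

-- The factor `3` could be any number above `2`: Cartan's lemma needs a strict inequality.
theorem exists_norm_multiset_prod_sub_le_mul {α d : ℝ} (hα : 0 < α) {S : Multiset ℂ} {Z : Set ℂ}
    (hc : 0 < cartanMeasure S.card α Z) :
    ∃ w ∈ Z, ∀ z, (∀ x ∈ S, dist z x ≤ d) → ‖(S.map (z - ·)).prod‖ ≤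
      (3 * d * Real.exp (1 / α) / cartanMeasure S.card α Z) ^ S.card *
        ‖(S.map (w - ·)).prod‖ := by
  let h := cartanMeasure S.card α Z / (3 * Real.exp (1 / α))
  have hh : 0 < h := by positivity
  have hlt : 2 * h * Real.exp (1 / α) < cartanMeasure S.card α Z := by
    simp only [h]
    field_simp
    linarith
  obtain ⟨w, hwZ, hw⟩ := exists_pow_le_prod_dist_of_lt_cartanMeasure hα hh hlt
  rw [← norm_multiset_prod_sub] at hw
  refine ⟨w, hwZ, fun z hz ↦ ?_⟩
  have hP := norm_multiset_prod_sub_le hz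
  calc ‖(S.map (z - ·)).prod‖ ≤ d ^ S.card := hP
    _ = (d / h) ^ S.card * h ^ S.card := by rw [← mul_pow, div_mul_cancel₀ d hh.ne']
    _ ≤ (d / h) ^ S.card * ‖(S.map (w - ·)).prod‖ := by
      refine mul_le_mul_of_nonneg_left hw ?_
      rw [div_pow]
      exact div_nonneg ((norm_nonneg _).trans hP) (pow_nonneg hh.le _)
    _ = _ := by simp only [h, div_div_eq_mul_div, mul_comm d, mul_right_comm]

theorem norm_le_sSup_norm_image {f : ℂ → ℂ} {Z K : Set ℂ} (hK : IsCompact K)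
    (hf : ContinuousOn f K) (hZK : Z ⊆ K) {z : ℂ} (hz : z ∈ Z) :
    ‖f z‖ ≤ sSup ((fun w ↦ ‖f w‖) '' Z) :=
  le_csSup ((hK.bddAbove_image hf.norm).mono (image_mono hZK)) (mem_image_of_mem _ hz)

end Remez

/-- Remez-type inequality for `(s,p)`-valent functions: if `f` is analytic in a
neighbourhood of the closed unit disk, has exactly `s` zeroes in it (counted with
multiplicity) and is `(s,p)`-valent there, and `Z` is a subset of the open unit disk
with `ρ = min{η : Z ⊆ D_η} < 1`, then for every `R < 1` and every `α > 0` with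
`c_{s,α}(Z) > 0`,
`max_{|z| ≤ R} |f| ≤ σ_p(R,ρ) (6 e^{1/α} / c_{s,α}(Z))^s max_Z |f|`, where
`σ_p(R,ρ) = ((1+R)/(1-R) · (1+ρ)/(1-ρ))^{2p}`. -/
theorem statement19 (U : Set ℂ) (hU : IsOpen U)
    (hU1 : Metric.closedBall (0 : ℂ) 1 ⊆ U)
    (f : ℂ → ℂ) (hf : AnalyticOnNhd ℂ f U) (s p : ℕ)
    (hzeros : solCount f (Metric.closedBall (0 : ℂ) 1) = (s : ℕ∞))
    (hval : IsSPValentOn f (Metric.closedBall (0 : ℂ) 1) s p)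
    (Z : Set ℂ) (hZ : Z ⊆ Metric.ball (0 : ℂ) 1)
    (ρ : ℝ) (hρZ : Z ⊆ Metric.closedBall (0 : ℂ) ρ)
    (hρmin : ∀ η : ℝ, Z ⊆ Metric.closedBall (0 : ℂ) η → ρ ≤ η) (hρ1 : ρ < 1)
    (R : ℝ) (hR0 : 0 < R) (hR1 : R < 1)
    (α : ℝ) (hα : 0 < α) (hc : 0 < cartanMeasure s α Z) :
    ∀ z ∈ Metric.closedBall (0 : ℂ) R,
      ‖f z‖ ≤
        (((1 + R) / (1 - R)) * ((1 + ρ) / (1 - ρ))) ^ (2 * p) *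
          (6 * Real.exp (1 / α) / cartanMeasure s α Z) ^ s *
          sSup ((fun w => ‖f w‖) '' Z) := by
  obtain ⟨S, g, rfl, hS, hg, hg0, hfg⟩ :=
    exists_eq_multiset_prod_mul_of_solCount_eq (hf.mono hU1) hzeros
  have hgp : IsPValentOn g (ball 0 1) p :=
    (hval.isPValentOn_of_eq_multiset_prod_mul hg hfg).mono ball_subset_closedBall
  obtain ⟨w, hwZ, hPw⟩ := exists_norm_multiset_prod_sub_le_mul (d := 2) hα hc
  intro z hz
  have hzR : ‖z‖ ≤ R := mem_closedBall_zero_iff.1 hz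
  have hg_le := norm_le_pow_mul_norm (hg.mono ball_subset_closedBall)
    (fun z hz ↦ hg0 z (ball_subset_closedBall hz)) hgp hzR hR1
    (mem_closedBall_zero_iff.1 (hρZ hwZ)) hρ1
  have hP_le := hPw z fun x hx ↦ (dist_le_norm_add_norm z x).trans <| by
    linarith [mem_closedBall_zero_iff.1 (hS x hx)]
  rw [show (3 * 2 : ℝ) = 6 by norm_num] at hP_le
  have hf_le := norm_le_sSup_norm_image (isCompact_closedBall 0 1) (hf.continuousOn.mono hU1)
    (hZ.trans ball_subset_closedBall) hwZ
  calc ‖f z‖ = ‖(S.map (z - ·)).prod‖ * ‖g z‖ := by rw [hfg, norm_mul]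
    _ ≤ _ := mul_le_mul hP_le hg_le (norm_nonneg _) ((norm_nonneg _).trans hP_le)
    _ = (((1 + R) / (1 - R)) * ((1 + ρ) / (1 - ρ))) ^ (2 * p) *
          (6 * Real.exp (1 / α) / cartanMeasure S.card α Z) ^ S.card * ‖f w‖ := by
      rw [hfg w, norm_mul]
      ring
    _ ≤ _ := by
      rw [pow_mul]
      gcongr
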